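/- (Proposition 4: unconditional Lipschitz stability with full lateral boundary data.) Under the assumptions of the context, there exists a constant C > 0, depending on n, T, M, δ₀, D, R, p₁ and H but not on y and f, such that (∫_D |f(x)|² dx)^{1/2} + sup_{0 ≤ t ≤ T} ( (∫_D |y(x,t)|² dx)^{1/2} + (∫_D |∂_t y(x,t)|² dx)^{1/2} ) ≤ C ( Σ_{i=1,2} ∫₀^T ∫_{B_{ρ₁}} |∂_t y(G_i(x'), t)|² ω_i(x') dx' dt )^{1/2}. -/

import Mathlib

noncomputable section

open MeasureTheory Metric Set
open scoped RealInnerProductSpace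

abbrev Esp (n : ℕ) : Type := EuclideanSpace ℝ (Fin n)

/-- The point `(x', xₙ) ∈ ℝ^{d+1} = ℝ^d × ℝ`. -/
noncomputable def graphMk (d : ℕ) (x' : Esp d) (xn : ℝ) : Esp (d+1) :=
  (EuclideanSpace.equiv (Fin (d+1)) ℝ).symm
    (Fin.snoc (⇑(EuclideanSpace.equiv (Fin d) ℝ) x') xn)

/-- `H` is `(M, δ₀)`-admissible on the compact set `K`. -/
def IsAdmissible {n : ℕ} (M δ₀ : ℝ) (K : Set (Esp n)) (H : Esp n → Esp n) : Prop :=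
  ∃ U : Set (Esp n), IsOpen U ∧ Convex ℝ U ∧ K ⊆ U ∧ ContDiffOn ℝ 1 H U ∧
    (∀ x ∈ U, ‖H x‖ ≤ M) ∧ (∀ x ∈ U, ‖fderiv ℝ H x‖ ≤ M) ∧ (∀ x ∈ K, δ₀ < ‖H x‖)

/-- `ψ_H(x) = ⟨x, H(x)⟩`. -/
noncomputable def psiW {n : ℕ} (H : Esp n → Esp n) (x : Esp n) : ℝ := ⟪x, H x⟫

/-- The Carleman weight `φ_H(x,t) = -βt + ψ_H(x)`. -/
noncomputable def phiW {n : ℕ} (β : ℝ) (H : Esp n → Esp n) (x : Esp n) (t : ℝ) : ℝ :=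
  -(β * t) + psiW H x

/-- Outward unit normal `ν₁` of the upper graph `xₙ = ℓ(x')`. -/
noncomputable def nuUp (d : ℕ) (ℓ : Esp d → ℝ) (x' : Esp d) : Esp (d+1) :=
  (Real.sqrt (1 + ‖gradient ℓ x'‖ ^ 2))⁻¹ • graphMk d (-(gradient ℓ x')) 1

/-- Outward unit normal `ν₂` of the lower graph `xₙ = m(x')`. -/
noncomputable def nuDown (d : ℕ) (m : Esp d → ℝ) (x' : Esp d) : Esp (d+1) :=
  (Real.sqrt (1 + ‖gradient m x'‖ ^ 2))⁻¹ • graphMk d (gradient m x') (-1)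

/-- Area element `ω(x') = √(1 + |∇m(x')|²)` of the graph of `m`. -/
noncomputable def omegaW (d : ℕ) (m : Esp d → ℝ) (x' : Esp d) : ℝ :=
  Real.sqrt (1 + ‖gradient m x'‖ ^ 2)

/-- The graph domain `D = {(x', xₙ) : |x'| < ρ₁, ℓ(x') − ℓ̃(x') < xₙ < ℓ(x')}`. -/
def graphDomain (d : ℕ) (ρ₁ : ℝ) (ℓ ℓt : Esp d → ℝ) : Set (Esp (d+1)) :=
  {x | ∃ x' : Esp d, ∃ xn : ℝ, ‖x'‖ < ρ₁ ∧ ℓ x' - ℓt x' < xn ∧ xn < ℓ x' ∧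
    x = graphMk d x' xn}

open Filter Topology

/-! ### Coordinates on `ℝ^{d+1} = ℝ^d × ℝ` -/

/-- The horizontal part `x'` of `x = (x', xₙ)`. -/
def horiz (d : ℕ) : Esp (d+1) →L[ℝ] Esp d :=
  LinearMap.toContinuousLinearMap
    { toFun := fun x => WithLp.toLp 2 fun i => x i.castSucc
      map_add' := fun x y => by ext i; simp
      map_smul' := fun c x => by ext i; simp }

/-- The vertical coordinate `xₙ` of `x = (x', xₙ)`. -/
def vert (d : ℕ) : Esp (d+1) →L[ℝ] ℝ := EuclideanSpace.proj (Fin.last d)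

@[simp] lemma horiz_apply (d : ℕ) (x : Esp (d+1)) (i : Fin d) : horiz d x i = x i.castSucc := rfl

@[simp] lemma vert_apply (d : ℕ) (x : Esp (d+1)) : vert d x = x (Fin.last d) := rfl

@[simp] lemma graphMk_last (d : ℕ) (x' : Esp d) (r : ℝ) : graphMk d x' r (Fin.last d) = r := by
  simp [graphMk]

@[simp] lemma graphMk_castSucc (d : ℕ) (x' : Esp d) (r : ℝ) (i : Fin d) :
    graphMk d x' r i.castSucc = x' i := by
  simp [graphMk]

@[simp] lemma horiz_graphMk (d : ℕ) (x' : Esp d) (r : ℝ) : horiz d (graphMk d x' r) = x' := by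
  ext i; simp

lemma vert_graphMk (d : ℕ) (x' : Esp d) (r : ℝ) : vert d (graphMk d x' r) = r := by simp

lemma graphMk_horiz_vert (d : ℕ) (x : Esp (d+1)) : graphMk d (horiz d x) (vert d x) = x := by
  ext i
  refine Fin.lastCases ?_ (fun i => ?_) i <;> simp

lemma norm_sq_eq_horiz_add_vert (d : ℕ) (x : Esp (d+1)) :
    ‖x‖ ^ 2 = ‖horiz d x‖ ^ 2 + (vert d x) ^ 2 := by
  simp [EuclideanSpace.norm_sq_eq, Fin.sum_univ_castSucc]

lemma norm_graphMk_sub (d : ℕ) (x' : Esp d) (r s : ℝ) :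
    ‖graphMk d x' r - graphMk d x' s‖ = |r - s| := by
  have h := norm_sq_eq_horiz_add_vert d (graphMk d x' r - graphMk d x' s)
  rw [map_sub, map_sub, horiz_graphMk, horiz_graphMk, vert_graphMk, vert_graphMk] at h
  rw [← abs_norm, ← sq_eq_sq_iff_abs_eq_abs, h]
  simp

lemma continuous_graphMk (d : ℕ) : Continuous fun p : Esp d × ℝ => graphMk d p.1 p.2 := by
  refine (EuclideanSpace.equiv (Fin (d+1)) ℝ).symm.continuous.comp ?_
  refine continuous_pi fun i => ?_
  refine Fin.lastCases ?_ (fun i => ?_) i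
  · simpa using continuous_snd
  · simp only [Fin.snoc_castSucc]
    exact (EuclideanSpace.proj (𝕜 := ℝ) i).continuous.comp continuous_fst

lemma measurePreserving_horiz_vert (d : ℕ) :
    MeasurePreserving (fun x : Esp (d+1) => (horiz d x, vert d x)) := by
  have h1 := PiLp.volume_preserving_ofLp (Fin (d+1))
  have h2 := volume_preserving_piFinSuccAbove (fun _ : Fin (d+1) => ℝ) (Fin.last d)
  have h3 : MeasurePreserving (Prod.swap : ℝ × (Fin d → ℝ) → (Fin d → ℝ) × ℝ) :=
    Measure.measurePreserving_swap
  have h4 := (PiLp.volume_preserving_toLp (Fin d)).prod (MeasurePreserving.id (volume : Measure ℝ))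
  have heq : (fun x : Esp (d+1) => (horiz d x, vert d x)) = Prod.map (WithLp.toLp 2) id ∘ Prod.swap ∘
      MeasurableEquiv.piFinSuccAbove (fun _ : Fin (d+1) => ℝ) (Fin.last d) ∘ WithLp.ofLp := by
    funext x
    refine Prod.ext ?_ ?_
    · ext i
      simp [MeasurableEquiv.piFinSuccAbove, Fin.init]
    · simp [MeasurableEquiv.piFinSuccAbove]
  rw [heq]
  exact h4.comp (h3.comp (h2.comp h1))

lemma measurableEmbedding_horiz_vert (d : ℕ) :
    MeasurableEmbedding (fun x : Esp (d+1) => (horiz d x, vert d x)) := by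
  refine Continuous.measurableEmbedding
    ((horiz d).continuous.prodMk (vert d).continuous) fun x y h => ?_
  obtain ⟨h1, h2⟩ := Prod.mk.inj h
  rw [← graphMk_horiz_vert d x, ← graphMk_horiz_vert d y, h1, h2]

/-! ### The graph domain -/

lemma mem_graphDomain_iff {d : ℕ} {ρ : ℝ} {ℓ ℓt : Esp d → ℝ} {x : Esp (d+1)} :
    x ∈ graphDomain d ρ ℓ ℓt ↔ ‖horiz d x‖ < ρ ∧
      ℓ (horiz d x) - ℓt (horiz d x) < vert d x ∧ vert d x < ℓ (horiz d x) := by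
  constructor
  · rintro ⟨x', r, h1, h2, h3, rfl⟩
    rw [horiz_graphMk, vert_graphMk]
    exact ⟨h1, h2, h3⟩
  · rintro ⟨h1, h2, h3⟩
    exact ⟨_, _, h1, h2, h3, (graphMk_horiz_vert d x).symm⟩

lemma isOpen_graphDomain {d : ℕ} {ρ : ℝ} {ℓ ℓt : Esp d → ℝ}
    (hℓ : ContinuousOn ℓ (closedBall 0 ρ)) (hℓt : ContinuousOn ℓt (closedBall 0 ρ)) :
    IsOpen (graphDomain d ρ ℓ ℓt) := by
  have hO : IsOpen (horiz d ⁻¹' ball 0 ρ) := isOpen_ball.preimage (horiz d).continuous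
  have hmaps : MapsTo (horiz d) (horiz d ⁻¹' ball 0 ρ) (closedBall 0 ρ) :=
    fun x hx => ball_subset_closedBall hx
  have h1 := hℓ.comp (horiz d).continuous.continuousOn hmaps
  have h2 := hℓt.comp (horiz d).continuous.continuousOn hmaps
  have h3 := (((h1.sub h2).prodMk (vert d).continuous.continuousOn).prodMk h1).isOpen_inter_preimage
    hO (t := {p : (ℝ × ℝ) × ℝ | p.1.1 < p.1.2 ∧ p.1.2 < p.2})
    ((isOpen_lt (continuous_fst.comp continuous_fst) (continuous_snd.comp continuous_fst)).and
      (isOpen_lt (continuous_snd.comp continuous_fst) continuous_snd))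
  convert h3 using 1
  ext x
  simp [mem_graphDomain_iff]

lemma isBounded_graphDomain {d : ℕ} {ρ : ℝ} {ℓ ℓt : Esp d → ℝ}
    (hℓ : ContinuousOn ℓ (closedBall 0 ρ)) (hℓt : ContinuousOn ℓt (closedBall 0 ρ)) :
    Bornology.IsBounded (graphDomain d ρ ℓ ℓt) := by
  obtain ⟨a, ha⟩ := (isCompact_closedBall _ _).exists_bound_of_continuousOn hℓ
  obtain ⟨b, hb⟩ := (isCompact_closedBall _ _).exists_bound_of_continuousOn (hℓ.sub hℓt)
  have hK : IsCompact ((fun p : Esp d × ℝ => graphMk d p.1 p.2) ''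
      (closedBall 0 ρ ×ˢ Icc (-b) a)) :=
    ((isCompact_closedBall _ _).prod isCompact_Icc).image (continuous_graphMk d)
  refine hK.isBounded.subset ?_
  rintro x ⟨x', r, h1, h2, h3, rfl⟩
  have hx' : x' ∈ closedBall (0 : Esp d) ρ := by simpa using h1.le
  have hlow : -b ≤ ℓ x' - ℓt x' := (abs_le.1 (hb x' hx')).1
  have hup : ℓ x' ≤ a := (abs_le.1 (ha x' hx')).2
  exact ⟨(x', r), ⟨hx', hlow.trans h2.le, h3.le.trans hup⟩, rfl⟩

lemma graphMk_mem_closure_graphDomain {d : ℕ} {ρ : ℝ} {ℓ ℓt : Esp d → ℝ} {x' : Esp d}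
    (hx' : ‖x'‖ < ρ) (hpos : 0 < ℓt x') {r : ℝ} (hr : r ∈ Icc (ℓ x' - ℓt x') (ℓ x')) :
    graphMk d x' r ∈ closure (graphDomain d ρ ℓ ℓt) := by
  rw [← closure_Ioo (by linarith : ℓ x' - ℓt x' < ℓ x').ne] at hr
  have hc : Continuous fun r => graphMk d x' r :=
    (continuous_graphMk d).comp (Continuous.prodMk_right x')
  refine closure_mono ?_ (image_closure_subset_closure_image hc ⟨r, hr, rfl⟩)
  rintro _ ⟨s, hs, rfl⟩
  exact ⟨x', s, hx', hs.1, hs.2, rfl⟩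
/-- The vertical strip of height `ε` above the graph of `c` over the ball of radius `ρ`. -/
def graphStrip (d : ℕ) (ρ ε : ℝ) (c : Esp d → ℝ) : Set (Esp (d+1)) :=
  {x | horiz d x ∈ ball 0 ρ ∧ vert d x ∈ Icc (c (horiz d x)) (c (horiz d x) + ε)}

lemma measurableSet_strip_prod {d : ℕ} {ρ ε : ℝ} {c : Esp d → ℝ}
    (hc : ContinuousOn c (ball 0 ρ)) :
    MeasurableSet {p : Esp d × ℝ | p.1 ∈ ball 0 ρ ∧ p.2 ∈ Icc (c p.1) (c p.1 + ε)} := by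
  classical
  have hc' : Measurable ((ball (0 : Esp d) ρ).piecewise c fun _ => 0) :=
    hc.measurable_piecewise continuousOn_const measurableSet_ball
  have h1 : MeasurableSet {p : Esp d × ℝ | p.1 ∈ ball 0 ρ} := measurable_fst measurableSet_ball
  have h2 := measurableSet_le (hc'.comp measurable_fst) (measurable_snd (α := Esp d) (β := ℝ))
  have h3 := measurableSet_le (measurable_snd (α := Esp d) (β := ℝ))
    ((hc'.comp measurable_fst).add_const ε)
  convert h1.inter (h2.inter h3) using 1
  ext p
  by_cases hp : p.1 ∈ ball (0 : Esp d) ρ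
  · simp only [mem_ofPred_eq, mem_inter_iff, Function.comp, piecewise_eq_of_mem _ _ _ hp, mem_Icc]
  · simp only [mem_ofPred_eq, mem_inter_iff, hp, false_and]

lemma measurableSet_graphStrip {d : ℕ} {ρ ε : ℝ} {c : Esp d → ℝ}
    (hc : ContinuousOn c (ball 0 ρ)) : MeasurableSet (graphStrip d ρ ε c) :=
  (measurePreserving_horiz_vert d).measurable (measurableSet_strip_prod hc)

lemma integrableOn_graphStrip_and_setIntegral_eq {d : ℕ} {ρ ε : ℝ} (hε : 0 ≤ ε) {c g : Esp d → ℝ}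
    (hc : ContinuousOn c (ball 0 ρ)) (hg : IntegrableOn g (ball 0 ρ)) :
    IntegrableOn (fun x => g (horiz d x)) (graphStrip d ρ ε c) ∧
      ∫ x in graphStrip d ρ ε c, g (horiz d x) = ε * ∫ x' in ball (0 : Esp d) ρ, g x' := by
  set S : Set (Esp d × ℝ) := {p | p.1 ∈ ball 0 ρ ∧ p.2 ∈ Icc (c p.1) (c p.1 + ε)} with hSdef
  have hS : MeasurableSet S := measurableSet_strip_prod hc
  have hslice : ∀ (h : Esp d → ℝ) (x' : Esp d), (fun r => S.indicator (fun p => h p.1) (x', r))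
      = (Icc (c x') (c x' + ε)).indicator fun _ => (ball (0 : Esp d) ρ).indicator h x' := by
    intro h x'
    ext r
    by_cases hx : x' ∈ ball (0 : Esp d) ρ <;> by_cases hr : r ∈ Icc (c x') (c x' + ε) <;>
      simp [indicator, hSdef, hx, hr] <;> simp_all
  have hInt : ∀ (h : Esp d → ℝ) (x' : Esp d), ∫ r, S.indicator (fun p => h p.1) (x', r)
      = ε * (ball (0 : Esp d) ρ).indicator h x' := by
    intro h x'
    rw [hslice h x', integral_indicator measurableSet_Icc]
    simp [hε]
  have hmeas : AEStronglyMeasurable (S.indicator fun p => g p.1)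
      ((volume : Measure (Esp d)).prod (volume : Measure ℝ)) := by
    rw [aestronglyMeasurable_indicator_iff hS]
    have h1 : AEStronglyMeasurable (fun p : Esp d × ℝ => g p.1)
        (((volume : Measure (Esp d)).restrict (ball 0 ρ)).prod
          ((volume : Measure ℝ).restrict univ)) := hg.aestronglyMeasurable.comp_fst
    rw [Measure.prod_restrict] at h1
    have hsub : S ⊆ ball (0 : Esp d) ρ ×ˢ univ := fun p hp => ⟨hp.1, mem_univ _⟩
    exact h1.mono_measure (Measure.restrict_mono hsub le_rfl)
  have hI : Integrable (S.indicator fun p => g p.1)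
      ((volume : Measure (Esp d)).prod (volume : Measure ℝ)) := by
    rw [integrable_prod_iff hmeas]
    refine ⟨ae_of_all _ fun x' => ?_, ?_⟩
    · rw [hslice g x', integrable_indicator_iff measurableSet_Icc]
      simp
    · have : ∀ x' : Esp d, ∫ r, ‖S.indicator (fun p => g p.1) (x', r)‖
          = ε * (ball (0 : Esp d) ρ).indicator (fun x => ‖g x‖) x' := by
        intro x'
        rw [← hInt]
        simp_rw [norm_indicator_eq_indicator_norm]
      simp_rw [this]
      exact ((integrable_indicator_iff measurableSet_ball).2 hg.norm).const_mul ε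
  have hI' : IntegrableOn (fun p : Esp d × ℝ => g p.1) S :=
    (integrable_indicator_iff hS).1 hI
  refine ⟨((measurePreserving_horiz_vert d).integrableOn_comp_preimage
    (measurableEmbedding_horiz_vert d)).2 hI', ?_⟩
  calc ∫ x in graphStrip d ρ ε c, g (horiz d x)
      = ∫ p in S, g p.1 := (measurePreserving_horiz_vert d).setIntegral_preimage_emb
        (measurableEmbedding_horiz_vert d) (fun p => g p.1) S
    _ = ∫ p, S.indicator (fun p => g p.1) p := (integral_indicator hS).symm
    _ = ∫ x', ∫ r, S.indicator (fun p => g p.1) (x', r) := integral_prod _ hI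
    _ = ε * ∫ x' in ball (0 : Esp d) ρ, g x' := by
      simp_rw [hInt, integral_const_mul, integral_indicator measurableSet_ball]
/-! ### Divergence theorem for compactly supported fields -/

/-- The divergence of a vector field on `ℝⁿ`. -/
def divergence {n : ℕ} (H : Esp n → Esp n) (x : Esp n) : ℝ :=
  ∑ i, fderiv ℝ H x (EuclideanSpace.single i 1) i

lemma abs_divergence_le {n : ℕ} {H : Esp n → Esp n} {x : Esp n} {M : ℝ}
    (hM : ‖fderiv ℝ H x‖ ≤ M) : |divergence H x| ≤ n * M := by
  calc |divergence H x| ≤ ∑ i, |fderiv ℝ H x (EuclideanSpace.single i 1) i| :=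
        Finset.abs_sum_le_sum_abs _ _
    _ ≤ ∑ _i : Fin n, M := by
        refine Finset.sum_le_sum fun i _ => ?_
        have h1 := PiLp.norm_apply_le (fderiv ℝ H x (EuclideanSpace.single i 1)) i
        have h2 := (fderiv ℝ H x).le_opNorm (EuclideanSpace.single i (1 : ℝ))
        rw [PiLp.norm_single, norm_one, mul_one] at h2
        exact (h1.trans h2).trans hM
    _ = n * M := by simp

lemma continuousOn_divergence {n : ℕ} {H : Esp n → Esp n} {D : Set (Esp n)} (hD : IsOpen D)
    (hH : ContDiffOn ℝ 1 H D) : ContinuousOn (divergence H) D := by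
  have h := hH.continuousOn_fderiv_of_isOpen hD le_rfl
  refine continuousOn_finsetSum _ fun i _ => ?_
  exact (EuclideanSpace.proj (𝕜 := ℝ) i).continuous.comp_continuousOn
    (h.clm_apply continuousOn_const)

lemma integrable_of_continuousOn_of_eq_zero {n : ℕ} {D K : Set (Esp n)} {h : Esp n → ℝ}
    (hK : IsCompact K) (hKD : K ⊆ D) (hh : ContinuousOn h D) (h0 : ∀ x ∉ K, h x = 0) :
    Integrable h := by
  rw [← integrableOn_iff_integrable_of_support_subset (s := K)]
  · exact (hh.mono hKD).integrableOn_compact hK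
  · exact fun x hx => by_contra fun hxK => hx (h0 x hxK)

lemma contDiff_of_contDiffOn_of_eq_zero {n : ℕ} {D K : Set (Esp n)} {g : Esp n → ℝ}
    (hD : IsOpen D) (hK : IsClosed K) (hKD : K ⊆ D) (hg : ContDiffOn ℝ 1 g D)
    (h0 : ∀ x ∉ K, g x = 0) : ContDiff ℝ 1 g := by
  refine contDiff_iff_contDiffAt.2 fun x => ?_
  by_cases hx : x ∈ D
  · exact hg.contDiffAt (hD.mem_nhds hx)
  · refine (contDiffAt_const (c := (0 : ℝ))).congr_of_eventuallyEq ?_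
    filter_upwards [hK.isOpen_compl.mem_nhds fun h => hx (hKD h)] with z hz using h0 z hz

lemma fderiv_eq_zero_of_eq_zero_off {n : ℕ} {K : Set (Esp n)} {g : Esp n → ℝ}
    (hK : IsClosed K) (h0 : ∀ x ∉ K, g x = 0) {x : Esp n} (hx : x ∉ K) : fderiv ℝ g x = 0 := by
  have : g =ᶠ[𝓝 x] fun _ => 0 := by
    filter_upwards [hK.isOpen_compl.mem_nhds hx] with z hz using h0 z hz
  rw [this.fderiv_eq]
  simp

lemma integral_fderiv_apply_eq_zero {n : ℕ} {g : Esp n → ℝ} (hg : ContDiff ℝ 1 g)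
    (hc : HasCompactSupport g) (v : Esp n) : ∫ x, fderiv ℝ g x v = 0 := by
  have hg' : Continuous fun x => fderiv ℝ g x v :=
    (hg.continuous_fderiv one_ne_zero).clm_apply continuous_const
  have hc' : HasCompactSupport fun x => fderiv ℝ g x v := hc.fderiv_apply (𝕜 := ℝ) v
  have h := integral_bilinear_hasLineDerivAt_right_eq_neg_left_of_integrable
    (μ := (volume : Measure (Esp n))) (f := fun _ => (1 : ℝ)) (f' := fun _ => 0) (g := g)
    (g' := fun x => fderiv ℝ g x v) (v := v) (B := ContinuousLinearMap.mul ℝ ℝ)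
    (by simp) (by simpa using hg'.integrable_of_hasCompactSupport hc')
    (by simpa using hg.continuous.integrable_of_hasCompactSupport hc)
    (fun x _ => by simpa using (hasFDerivAt_const (1 : ℝ) x).hasLineDerivAt v)
    (fun x _ => ((hg.differentiable one_ne_zero) x).hasFDerivAt.hasLineDerivAt v)
  simpa using h

lemma setIntegral_fderiv_apply_add_mul_divergence {n : ℕ} {D K : Set (Esp n)} {W : Esp n → ℝ}
    {H : Esp n → Esp n} (hD : IsOpen D) (hK : IsCompact K) (hKD : K ⊆ D)
    (hW : ContDiffOn ℝ 1 W D) (hW0 : ∀ x ∉ K, W x = 0) (hH : ContDiffOn ℝ 1 H D) :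
    ∫ x in D, (fderiv ℝ W x (H x) + W x * divergence H x) = 0 := by
  have hg : ∀ i, ContDiffOn ℝ 1 (fun x => W x * H x i) D := fun i =>
    hW.mul ((EuclideanSpace.proj (𝕜 := ℝ) i).contDiff.comp_contDiffOn hH)
  have hg0 : ∀ i, ∀ x ∉ K, W x * H x i = 0 := fun i x hx => by rw [hW0 x hx, zero_mul]
  have hgC : ∀ i, ContDiff ℝ 1 (fun x => W x * H x i) := fun i =>
    contDiff_of_contDiffOn_of_eq_zero hD hK.isClosed hKD (hg i) (hg0 i)
  have hgS : ∀ i, HasCompactSupport (fun x => W x * H x i) := fun i =>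
    HasCompactSupport.intro hK (hg0 i)
  have hgd0 : ∀ i, ∀ x ∉ K, fderiv ℝ (fun x => W x * H x i) x (EuclideanSpace.single i 1) = 0 :=
    fun i x hx => by rw [fderiv_eq_zero_of_eq_zero_off hK.isClosed (hg0 i) hx]; simp
  have hgI : ∀ i, Integrable
      (fun x => fderiv ℝ (fun x => W x * H x i) x (EuclideanSpace.single i 1)) := fun i =>
    integrable_of_continuousOn_of_eq_zero hK (subset_univ K)
      (((hgC i).continuous_fderiv one_ne_zero).clm_apply continuous_const).continuousOn (hgd0 i)
  have hpt : ∀ x ∈ D, fderiv ℝ W x (H x) + W x * divergence H x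
      = ∑ i, fderiv ℝ (fun x => W x * H x i) x (EuclideanSpace.single i 1) := by
    intro x hx
    have hWd := ((hW.contDiffAt (hD.mem_nhds hx)).differentiableAt one_ne_zero).hasFDerivAt
    have hHd := ((hH.contDiffAt (hD.mem_nhds hx)).differentiableAt one_ne_zero).hasFDerivAt
    have hHi : ∀ i, HasFDerivAt (fun x => H x i)
        ((EuclideanSpace.proj (𝕜 := ℝ) i).comp (fderiv ℝ H x)) x := fun i =>
      (EuclideanSpace.proj (𝕜 := ℝ) i).hasFDerivAt.comp x hHd
    have hsum : ∑ i, H x i • EuclideanSpace.single i (1 : ℝ) = H x := by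
      ext j; simp [Finset.sum_apply, Pi.single_apply]
    have hWH : fderiv ℝ W x (H x) = ∑ i, H x i * fderiv ℝ W x (EuclideanSpace.single i 1) := by
      conv_lhs => rw [← hsum]
      simp [map_sum]
    rw [hWH, divergence, Finset.mul_sum, ← Finset.sum_add_distrib]
    refine Finset.sum_congr rfl fun i _ => ?_
    have hprod : HasFDerivAt (fun x => W x * H x i) _ x := hWd.mul (hHi i)
    rw [hprod.fderiv]
    simp
    ring
  rw [setIntegral_congr_fun hD.measurableSet hpt,
    integral_finsetSum _ fun i _ => (hgI i).integrableOn]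
  refine Finset.sum_eq_zero fun i _ => ?_
  rw [setIntegral_eq_integral_of_forall_compl_eq_zero fun x hx => hgd0 i x fun h => hx (hKD h)]
  exact integral_fderiv_apply_eq_zero (hgC i) (hgS i) _
/-! ### Cutoff functions exhausting the graph domain -/

/-- The points of the graph domain at vertical distance at least `ε` from the boundary. -/
def graphCore (d : ℕ) (ρ : ℝ) (ℓ ℓt : Esp d → ℝ) (ε : ℝ) : Set (Esp (d+1)) :=
  {x | horiz d x ∈ closedBall 0 ρ ∧ ℓ (horiz d x) - ℓt (horiz d x) + ε ≤ vert d x ∧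
    vert d x ≤ ℓ (horiz d x) - ε}

lemma graphCore_subset {d : ℕ} {ρ : ℝ} {ℓ ℓt : Esp d → ℝ} {ε : ℝ} (hε : 0 < ε)
    (hℓt0 : ∀ x' : Esp d, ‖x'‖ = ρ → ℓt x' = 0) :
    graphCore d ρ ℓ ℓt ε ⊆ graphDomain d ρ ℓ ℓt := by
  rintro x ⟨h1, h2, h3⟩
  rw [mem_closedBall_zero_iff] at h1
  refine mem_graphDomain_iff.2 ⟨lt_of_le_of_ne h1 fun h => ?_, by linarith, by linarith⟩
  linarith [hℓt0 _ h]

lemma isCompact_graphCore {d : ℕ} {ρ : ℝ} {ℓ ℓt : Esp d → ℝ} {ε : ℝ} (hε : 0 < ε)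
    (hℓ : ContinuousOn ℓ (closedBall 0 ρ)) (hℓt : ContinuousOn ℓt (closedBall 0 ρ))
    (hℓt0 : ∀ x' : Esp d, ‖x'‖ = ρ → ℓt x' = 0) :
    IsCompact (graphCore d ρ ℓ ℓt ε) := by
  refine Metric.isCompact_of_isClosed_isBounded ?_
    ((isBounded_graphDomain hℓ hℓt).subset (graphCore_subset hε hℓt0))
  have hO : IsClosed (horiz d ⁻¹' closedBall 0 ρ) := isClosed_closedBall.preimage (horiz d).continuous
  have h1 := hℓ.comp (horiz d).continuous.continuousOn (mapsTo_preimage (horiz d) _)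
  have h2 := hℓt.comp (horiz d).continuous.continuousOn (mapsTo_preimage (horiz d) _)
  exact (((h1.sub h2).prodMk (vert d).continuous.continuousOn).prodMk h1).preimage_isClosed_of_isClosed
    hO (t := {p : (ℝ × ℝ) × ℝ | p.1.1 + ε ≤ p.1.2 ∧ p.1.2 ≤ p.2 - ε})
    ((isClosed_le ((continuous_fst.comp continuous_fst).add continuous_const)
      (continuous_snd.comp continuous_fst)).inter
      (isClosed_le (continuous_snd.comp continuous_fst) (continuous_snd.sub continuous_const)))

open Classical in
/-- A smooth cutoff function, supported in `graphCore d ρ ℓ ℓt ε` and equal to one on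
`graphCore d ρ ℓ ℓt (2 * ε)`. -/
def graphCutoff (d : ℕ) (ρ : ℝ) (ℓ ℓt : Esp d → ℝ) (ε : ℝ) (x : Esp (d+1)) : ℝ :=
  if x ∈ graphDomain d ρ ℓ ℓt then
    Real.smoothTransition ((ℓ (horiz d x) - vert d x) / ε - 1) *
      Real.smoothTransition ((vert d x - (ℓ (horiz d x) - ℓt (horiz d x))) / ε - 1)
  else 0

section Cutoff

variable {d : ℕ} {ρ : ℝ} {ℓ ℓt : Esp d → ℝ} {ε : ℝ}

lemma graphCutoff_nonneg (x : Esp (d+1)) : 0 ≤ graphCutoff d ρ ℓ ℓt ε x := by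
  unfold graphCutoff
  split_ifs
  · exact mul_nonneg (Real.smoothTransition.nonneg _) (Real.smoothTransition.nonneg _)
  · exact le_rfl

lemma graphCutoff_le_one (x : Esp (d+1)) : graphCutoff d ρ ℓ ℓt ε x ≤ 1 := by
  unfold graphCutoff
  split_ifs
  · exact mul_le_one₀ (Real.smoothTransition.le_one _) (Real.smoothTransition.nonneg _)
      (Real.smoothTransition.le_one _)
  · exact zero_le_one

lemma graphCutoff_eq_zero (hε : 0 < ε) {x : Esp (d+1)} (hx : x ∉ graphCore d ρ ℓ ℓt ε) :
    graphCutoff d ρ ℓ ℓt ε x = 0 := by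
  unfold graphCutoff
  split_ifs with hD
  · obtain ⟨h1, h2, h3⟩ := mem_graphDomain_iff.1 hD
    by_cases h4 : vert d x ≤ ℓ (horiz d x) - ε
    · have h5 : vert d x < ℓ (horiz d x) - ℓt (horiz d x) + ε := by
        by_contra! h
        exact hx ⟨by simpa using h1.le, h, h4⟩
      rw [Real.smoothTransition.zero_of_nonpos (x := (vert d x - _) / ε - 1), mul_zero]
      rw [sub_nonpos, div_le_one hε]
      linarith
    · rw [Real.smoothTransition.zero_of_nonpos (x := (_ - vert d x) / ε - 1), zero_mul]
      rw [sub_nonpos, div_le_one hε]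
      linarith
  · rfl

lemma graphCutoff_eq_one (hε : 0 < ε) {x : Esp (d+1)} (hx : x ∈ graphDomain d ρ ℓ ℓt)
    (h1 : 2 * ε ≤ ℓ (horiz d x) - vert d x)
    (h2 : 2 * ε ≤ vert d x - (ℓ (horiz d x) - ℓt (horiz d x))) :
    graphCutoff d ρ ℓ ℓt ε x = 1 := by
  rw [graphCutoff, if_pos hx, Real.smoothTransition.one_of_one_le, one_mul,
    Real.smoothTransition.one_of_one_le]
  · rw [le_sub_iff_add_le, le_div_iff₀ hε]; linarith
  · rw [le_sub_iff_add_le, le_div_iff₀ hε]; linarith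

lemma tendsto_graphCutoff {x : Esp (d+1)} (hx : x ∈ graphDomain d ρ ℓ ℓt) :
    Tendsto (fun ε => graphCutoff d ρ ℓ ℓt ε x) (𝓝[>] 0) (𝓝 1) := by
  refine tendsto_const_nhds.congr' ?_
  obtain ⟨-, h2, h3⟩ := mem_graphDomain_iff.1 hx
  have hpos : 0 < min (ℓ (horiz d x) - vert d x)
      (vert d x - (ℓ (horiz d x) - ℓt (horiz d x))) / 2 :=
    half_pos (lt_min (by linarith) (by linarith))
  filter_upwards [Ioo_mem_nhdsGT hpos] with ε hε
  have h4 : 2 * ε ≤ min (ℓ (horiz d x) - vert d x)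
      (vert d x - (ℓ (horiz d x) - ℓt (horiz d x))) := by linarith [hε.2]
  exact (graphCutoff_eq_one hε.1 hx (h4.trans (min_le_left _ _)) (h4.trans (min_le_right _ _))).symm

lemma contDiffOn_comp_horiz {c : Esp d → ℝ} (hc : ContDiffOn ℝ 1 c (closedBall 0 ρ)) :
    ContDiffOn ℝ 1 (fun x => c (horiz d x)) (graphDomain d ρ ℓ ℓt) :=
  hc.comp (horiz d).contDiff.contDiffOn fun x hx => by
    simpa using (mem_graphDomain_iff.1 hx).1.le

lemma contDiffOn_graphCutoff (hℓ : ContDiffOn ℝ 1 ℓ (closedBall 0 ρ))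
    (hℓt : ContDiffOn ℝ 1 ℓt (closedBall 0 ρ)) :
    ContDiffOn ℝ 1 (graphCutoff d ρ ℓ ℓt ε) (graphDomain d ρ ℓ ℓt) := by
  have hθ : ContDiff ℝ 1 Real.smoothTransition := Real.smoothTransition.contDiff (n := 1)
  have h1 := contDiffOn_comp_horiz (ℓ := ℓ) (ℓt := ℓt) hℓ
  have h2 := contDiffOn_comp_horiz (ℓ := ℓ) (ℓt := ℓt) hℓt
  have hv : ContDiffOn ℝ 1 (fun x => vert d x) (graphDomain d ρ ℓ ℓt) := (vert d).contDiff.contDiffOn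
  refine ContDiffOn.congr (f := fun x =>
    Real.smoothTransition ((ℓ (horiz d x) - vert d x) / ε - 1) *
      Real.smoothTransition ((vert d x - (ℓ (horiz d x) - ℓt (horiz d x))) / ε - 1)) ?_
    fun x hx => by rw [graphCutoff, if_pos hx]
  exact (hθ.comp_contDiffOn (((h1.sub hv).div_const ε).sub contDiffOn_const)).mul
    (hθ.comp_contDiffOn (((hv.sub (h1.sub h2)).div_const ε).sub contDiffOn_const))

end Cutoff

lemma exists_bound_deriv_smoothTransition :
    ∃ C > 0, ∀ r, |deriv Real.smoothTransition r| ≤ (Icc (0 : ℝ) 1).indicator (fun _ => C) r := by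
  have hc : Continuous (deriv Real.smoothTransition) :=
    (Real.smoothTransition.contDiff (n := 1)).continuous_deriv le_rfl
  obtain ⟨C, hC⟩ := (isCompact_Icc (a := (0 : ℝ)) (b := 1)).exists_bound_of_continuousOn
    hc.continuousOn
  refine ⟨max C 1, by positivity, fun r => ?_⟩
  by_cases hr : r ∈ Icc (0 : ℝ) 1
  · rw [indicator_of_mem hr]
    exact (hC r hr).trans (le_max_left _ _)
  · rw [indicator_of_notMem hr]
    rw [mem_Icc, not_and_or, not_le, not_le] at hr
    have h0 : deriv Real.smoothTransition r = 0 := by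
      rcases hr with hr | hr
      · have : Real.smoothTransition =ᶠ[𝓝 r] fun _ => 0 := by
          filter_upwards [Iio_mem_nhds hr] with s hs
            using Real.smoothTransition.zero_of_nonpos (le_of_lt hs)
        rw [this.deriv_eq]; simp
      · have : Real.smoothTransition =ᶠ[𝓝 r] fun _ => 1 := by
          filter_upwards [Ioi_mem_nhds hr] with s hs
            using Real.smoothTransition.one_of_one_le (le_of_lt hs)
        rw [this.deriv_eq]; simp
    simp [h0]

lemma abs_fderiv_sub_vert_le {d : ℕ} {c : Esp d → ℝ} {x' : Esp d}
    (v : Esp (d+1)) : |fderiv ℝ c x' (horiz d v) - vert d v| ≤ omegaW d c x' * ‖v‖ := by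
  have h1 : |fderiv ℝ c x' (horiz d v)| ≤ ‖gradient c x'‖ * ‖horiz d v‖ := by
    have : fderiv ℝ c x' (horiz d v) = ⟪gradient c x', horiz d v⟫ := by
      rw [gradient, InnerProductSpace.toDual_symm_apply]
    rw [this]
    exact abs_real_inner_le_norm _ _
  have h2 : |fderiv ℝ c x' (horiz d v) - vert d v|
      ≤ ‖gradient c x'‖ * ‖horiz d v‖ + |vert d v| :=
    (abs_sub _ _).trans (by gcongr)
  refine h2.trans ?_
  rw [omegaW, ← Real.sqrt_sq (norm_nonneg v), ← Real.sqrt_mul (by positivity)]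
  refine Real.le_sqrt_of_sq_le ?_
  rw [norm_sq_eq_horiz_add_vert d v, ← sq_abs (vert d v)]
  nlinarith [sq_nonneg (‖gradient c x'‖ * |vert d v| - ‖horiz d v‖)]

/-- Pointwise bound for the derivative of the cutoff, concentrated on two strips along the upper
and lower graphs. -/
lemma exists_abs_fderiv_graphCutoff_le :
    ∃ C > 0, ∀ (d : ℕ) (ρ : ℝ) (ℓ ℓt : Esp d → ℝ), ContDiffOn ℝ 1 ℓ (closedBall 0 ρ) →
      ContDiffOn ℝ 1 ℓt (closedBall 0 ρ) → ∀ ε > 0, ∀ x ∈ graphDomain d ρ ℓ ℓt, ∀ v : Esp (d+1),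
      |fderiv ℝ (graphCutoff d ρ ℓ ℓt ε) x v| ≤ C / ε * ‖v‖ *
        ((graphStrip d ρ ε fun z => ℓ z - 2 * ε).indicator (fun x => omegaW d ℓ (horiz d x)) x
        + (graphStrip d ρ ε fun z => ℓ z - ℓt z + ε).indicator
          (fun x => omegaW d (fun z => ℓ z - ℓt z) (horiz d x)) x) := by
  obtain ⟨C, hC, hb⟩ := exists_bound_deriv_smoothTransition
  refine ⟨C, hC, fun d ρ ℓ ℓt hℓ hℓt ε hε x hx v => ?_⟩
  obtain ⟨hx1, hx2, hx3⟩ := mem_graphDomain_iff.1 hx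
  have hxb : horiz d x ∈ ball (0 : Esp d) ρ := by simpa using hx1
  have hnhds : closedBall (0 : Esp d) ρ ∈ 𝓝 (horiz d x) :=
    mem_of_superset (isOpen_ball.mem_nhds hxb) ball_subset_closedBall
  have hd1 := (hℓ.contDiffAt hnhds).differentiableAt one_ne_zero
  have hd2 : DifferentiableAt ℝ (fun z => ℓ z - ℓt z) (horiz d x) :=
    hd1.sub ((hℓt.contDiffAt hnhds).differentiableAt one_ne_zero)
  have hθ : ∀ r, HasDerivAt Real.smoothTransition (deriv Real.smoothTransition r) r := fun r =>
    (((Real.smoothTransition.contDiff (n := 1)).differentiable one_ne_zero) r).hasDerivAt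
  set a := (ℓ (horiz d x) - vert d x) / ε - 1 with ha
  set b := (vert d x - (ℓ (horiz d x) - ℓt (horiz d x))) / ε - 1 with hbdef
  have hA : HasFDerivAt (fun x => Real.smoothTransition ((ℓ (horiz d x) - vert d x) / ε - 1))
      (deriv Real.smoothTransition a •
        (ε⁻¹ • ((fderiv ℝ ℓ (horiz d x)).comp (horiz d) - vert d))) x := by
    have h := ((hd1.hasFDerivAt.comp x (horiz d).hasFDerivAt).sub (vert d).hasFDerivAt).mul_const ε⁻¹
    exact (hθ a).comp_hasFDerivAt x (h.sub_const 1)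
  have hB : HasFDerivAt (fun x => Real.smoothTransition
      ((vert d x - (ℓ (horiz d x) - ℓt (horiz d x))) / ε - 1))
      (deriv Real.smoothTransition b •
        (ε⁻¹ • (vert d - (fderiv ℝ (fun z => ℓ z - ℓt z) (horiz d x)).comp (horiz d)))) x := by
    have h := ((vert d).hasFDerivAt.sub
      (hd2.hasFDerivAt.comp x (horiz d).hasFDerivAt)).mul_const ε⁻¹
    exact (hθ b).comp_hasFDerivAt x (h.sub_const 1)
  have heq : graphCutoff d ρ ℓ ℓt ε =ᶠ[𝓝 x] fun x =>
      Real.smoothTransition ((ℓ (horiz d x) - vert d x) / ε - 1) *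
      Real.smoothTransition ((vert d x - (ℓ (horiz d x) - ℓt (horiz d x))) / ε - 1) := by
    filter_upwards [(isOpen_graphDomain hℓ.continuousOn hℓt.continuousOn).mem_nhds hx] with z hz
    rw [graphCutoff, if_pos hz]
  have hAB : HasFDerivAt (fun x =>
      Real.smoothTransition ((ℓ (horiz d x) - vert d x) / ε - 1) *
      Real.smoothTransition ((vert d x - (ℓ (horiz d x) - ℓt (horiz d x))) / ε - 1)) _ x := hA.mul hB
  rw [heq.fderiv_eq, hAB.fderiv]
  have hva := abs_fderiv_sub_vert_le (c := ℓ) (x' := horiz d x) v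
  have hvb := abs_fderiv_sub_vert_le (c := fun z => ℓ z - ℓt z) (x' := horiz d x) v
  rw [abs_sub_comm] at hvb
  have hsa : (Icc (0 : ℝ) 1).indicator (fun _ => C) a * omegaW d ℓ (horiz d x) = C *
      (graphStrip d ρ ε fun z => ℓ z - 2 * ε).indicator (fun x => omegaW d ℓ (horiz d x)) x := by
    have hiff : a ∈ Icc (0 : ℝ) 1 ↔ x ∈ graphStrip d ρ ε fun z => ℓ z - 2 * ε := by
      simp only [graphStrip, mem_ofPred_eq, hxb, true_and, mem_Icc, ha, sub_nonneg, one_le_div hε,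
        sub_le_iff_le_add, div_le_iff₀ hε]
      constructor <;> rintro ⟨h1, h2⟩ <;> constructor <;> linarith
    by_cases h : a ∈ Icc (0 : ℝ) 1
    · rw [indicator_of_mem h, indicator_of_mem (hiff.1 h)]
    · rw [indicator_of_notMem h, indicator_of_notMem (fun h' => h (hiff.2 h')), zero_mul, mul_zero]
  have hsb : (Icc (0 : ℝ) 1).indicator (fun _ => C) b * omegaW d (fun z => ℓ z - ℓt z) (horiz d x)
      = C * (graphStrip d ρ ε fun z => ℓ z - ℓt z + ε).indicator
        (fun x => omegaW d (fun z => ℓ z - ℓt z) (horiz d x)) x := by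
    have hiff : b ∈ Icc (0 : ℝ) 1 ↔ x ∈ graphStrip d ρ ε fun z => ℓ z - ℓt z + ε := by
      simp only [graphStrip, mem_ofPred_eq, hxb, true_and, mem_Icc, hbdef, sub_nonneg,
        one_le_div hε, sub_le_iff_le_add, div_le_iff₀ hε]
      constructor <;> rintro ⟨h1, h2⟩ <;> constructor <;> linarith
    by_cases h : b ∈ Icc (0 : ℝ) 1
    · rw [indicator_of_mem h, indicator_of_mem (hiff.1 h)]
    · rw [indicator_of_notMem h, indicator_of_notMem (fun h' => h (hiff.2 h')), zero_mul, mul_zero]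
  have hmul : ∀ s t u p q : ℝ, |s| ≤ 1 → |t| ≤ p → |u| ≤ q →
      |s * (t * (ε⁻¹ * u))| ≤ p * (ε⁻¹ * q) := by
    intro s t u p q hs ht hu
    rw [abs_mul, abs_mul, abs_mul, abs_of_pos (inv_pos.2 hε)]
    have : |t| * (ε⁻¹ * |u|) ≤ p * (ε⁻¹ * q) := by
      have := (abs_nonneg t).trans ht
      gcongr
    exact (mul_le_of_le_one_left (by positivity) hs).trans this
  have hθ1 : ∀ r, |Real.smoothTransition r| ≤ 1 := fun r => by
    rw [abs_of_nonneg (Real.smoothTransition.nonneg r)]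
    exact Real.smoothTransition.le_one r
  simp only [add_apply, smul_apply,
    sub_apply, ContinuousLinearMap.comp_apply, smul_eq_mul]
  refine (abs_add_le _ _).trans ?_
  refine (add_le_add (hmul _ _ _ _ _ (hθ1 _) (hb b) hvb)
    (hmul _ _ _ _ _ (hθ1 _) (hb a) hva)).trans (le_of_eq ?_)
  calc _ = ε⁻¹ * ‖v‖ * ((Icc (0 : ℝ) 1).indicator (fun _ => C) a * omegaW d ℓ (horiz d x)
      + (Icc (0 : ℝ) 1).indicator (fun _ => C) b
        * omegaW d (fun z => ℓ z - ℓt z) (horiz d x)) := by ring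
    _ = _ := by rw [hsa, hsb]; ring
/-! ### The time derivative of a solution -/

/-- The time derivative of `g`, one-sided at the endpoints of `[0, T]`. -/
def timeDeriv {n : ℕ} (T : ℝ) (g : Esp n → ℝ → ℝ) (x : Esp n) (t : ℝ) : ℝ :=
  derivWithin (g x) (Icc 0 T) t

section TimeDeriv

variable {n : ℕ} {T : ℝ} {K D : Set (Esp n)} {g : Esp n → ℝ → ℝ}

lemma hasDerivWithinAt_slice {f' : Esp n × ℝ →L[ℝ] ℝ} {x : Esp n} {t : ℝ} (hx : x ∈ K)
    (h : HasFDerivWithinAt (fun q : Esp n × ℝ => g q.1 q.2) f' (K ×ˢ Icc 0 T) (x, t)) :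
    HasDerivWithinAt (g x) (f' (0, 1)) (Icc 0 T) t := by
  have h1 : HasDerivWithinAt (fun s : ℝ => (x, s)) ((0 : Esp n), (1 : ℝ)) (Icc 0 T) t :=
    (hasDerivWithinAt_const t _ x).prodMk (hasDerivWithinAt_id t _)
  exact h.comp_hasDerivWithinAt t h1 fun s hs => ⟨hx, hs⟩

lemma timeDeriv_eq_of_hasFDerivWithinAt (hT : 0 < T) {f' : Esp n × ℝ →L[ℝ] ℝ} {x : Esp n} {t : ℝ}
    (hx : x ∈ K) (ht : t ∈ Icc 0 T)
    (h : HasFDerivWithinAt (fun q : Esp n × ℝ => g q.1 q.2) f' (K ×ˢ Icc 0 T) (x, t)) :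
    timeDeriv T g x t = f' (0, 1) :=
  (hasDerivWithinAt_slice hx h).derivWithin (uniqueDiffOn_Icc hT t ht)

lemma hasDerivWithinAt_timeDeriv
    (hg : ContDiffOn ℝ 2 (fun q : Esp n × ℝ => g q.1 q.2) (K ×ˢ Icc 0 T)) {x : Esp n} {t : ℝ}
    (hx : x ∈ K) (ht : t ∈ Icc 0 T) :
    HasDerivWithinAt (g x) (timeDeriv T g x t) (Icc 0 T) t :=
  (hasDerivWithinAt_slice hx ((hg.differentiableOn two_ne_zero) (x, t)
    ⟨hx, ht⟩).hasFDerivWithinAt).differentiableWithinAt.hasDerivWithinAt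

lemma contDiffOn_timeDeriv (hT : 0 < T)
    (hg : ContDiffOn ℝ 2 (fun q : Esp n × ℝ => g q.1 q.2) (K ×ˢ Icc 0 T)) :
    ContDiffOn ℝ 1 (fun q : Esp n × ℝ => timeDeriv T g q.1 q.2) (K ×ˢ Icc 0 T) := by
  intro q hq
  have h2 : ContDiffWithinAt ℝ (1 + 1) (fun q : Esp n × ℝ => g q.1 q.2) (K ×ˢ Icc 0 T) q := by
    simpa [one_add_one_eq_two] using hg q hq
  obtain ⟨u, hu, hus, -, f', hf', hc⟩ :=
    (contDiffWithinAt_succ_iff_hasFDerivWithinAt' (by simp)).1 h2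
  rw [insert_eq_of_mem hq] at hu hus
  have hev : ∀ p ∈ u, timeDeriv T g p.1 p.2 = f' p (0, 1) := fun p hp =>
    timeDeriv_eq_of_hasFDerivWithinAt hT (hus hp).1 (hus hp).2 (hf' p hp)
  refine (hc.clm_apply contDiffWithinAt_const).congr_of_eventuallyEq
    (mem_of_superset hu hev) (hev q (mem_of_mem_nhdsWithin hq hu))

lemma deriv_eq_timeDeriv {x : Esp n} {t : ℝ} (ht : t ∈ Ioo 0 T) :
    deriv (g x) t = timeDeriv T g x t :=
  (derivWithin_of_mem_nhds (Icc_mem_nhds ht.1 ht.2)).symm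

lemma deriv_sq_le_timeDeriv_sq (hT : 0 < T) {x : Esp n} {t : ℝ} (ht : t ∈ Icc 0 T) :
    deriv (g x) t ^ 2 ≤ timeDeriv T g x t ^ 2 := by
  by_cases h : DifferentiableAt ℝ (g x) t
  · rw [timeDeriv, h.derivWithin (uniqueDiffOn_Icc hT t ht)]
  · rw [deriv_zero_of_not_differentiableAt h, zero_pow two_ne_zero]
    positivity

lemma mem_nhds_prod_Icc (hD : IsOpen D) {x : Esp n} {t : ℝ} (hx : x ∈ D) (ht : t ∈ Ioo 0 T) :
    D ×ˢ Icc 0 T ∈ 𝓝 (x, t) :=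
  prod_mem_nhds (hD.mem_nhds hx) (Icc_mem_nhds ht.1 ht.2)

lemma timeDeriv_eq_fderiv (hD : IsOpen D)
    (hg : ContDiffOn ℝ 2 (fun q : Esp n × ℝ => g q.1 q.2) (D ×ˢ Icc 0 T)) {x : Esp n} {t : ℝ}
    (hx : x ∈ D) (ht : t ∈ Ioo 0 T) :
    timeDeriv T g x t = fderiv ℝ (fun q : Esp n × ℝ => g q.1 q.2) (x, t) (0, 1) := by
  have h := ((hg.contDiffAt (mem_nhds_prod_Icc hD hx ht)).differentiableAt two_ne_zero).hasFDerivAt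
  exact timeDeriv_eq_of_hasFDerivWithinAt (ht.1.trans ht.2) hx ⟨ht.1.le, ht.2.le⟩
    h.hasFDerivWithinAt

end TimeDeriv

section Equation

variable {n : ℕ} {T : ℝ} {D : Set (Esp n)} {y R : Esp n → ℝ → ℝ} {f p₁ : Esp n → ℝ}
  {H : Esp n → Esp n}

lemma transport_eq_fderiv (hD : IsOpen D)
    (hy : ContDiffOn ℝ 2 (fun q : Esp n × ℝ => y q.1 q.2) (D ×ˢ Icc 0 T))
    (heq : ∀ x ∈ D, ∀ t ∈ Ioo (0:ℝ) T,
      deriv (y x) t + ⟪H x, gradient (fun z => y z t) x⟫ + p₁ x * y x t = R x t * f x)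
    {x : Esp n} {t : ℝ} (hx : x ∈ D) (ht : t ∈ Ioo 0 T) :
    fderiv ℝ (fun q : Esp n × ℝ => y q.1 q.2) (x, t) (H x, 1) = R x t * f x - p₁ x * y x t := by
  have h := ((hy.contDiffAt (mem_nhds_prod_Icc hD hx ht)).differentiableAt two_ne_zero).hasFDerivAt
  have h1 : ⟪H x, gradient (fun z => y z t) x⟫
      = fderiv ℝ (fun q : Esp n × ℝ => y q.1 q.2) (x, t) (H x, 0) := by
    have hl : HasFDerivAt (fun z : Esp n => (z, t)) (ContinuousLinearMap.inl ℝ (Esp n) ℝ) x :=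
      hasFDerivAt_prodMk_left x t
    have hs : HasFDerivAt (fun z => y z t)
        ((fderiv ℝ (fun q : Esp n × ℝ => y q.1 q.2) (x, t)).comp
          (ContinuousLinearMap.inl ℝ (Esp n) ℝ)) x :=
      HasFDerivAt.comp (g := fun q : Esp n × ℝ => y q.1 q.2) (f := fun z => (z, t)) x h hl
    rw [real_inner_comm, gradient, InnerProductSpace.toDual_symm_apply, hs.fderiv]
    simp
  have h2 := heq x hx t ht
  rw [deriv_eq_timeDeriv ht, timeDeriv_eq_fderiv hD hy hx ht, h1, ← map_add] at h2
  simp only [Prod.mk_add_mk, zero_add, add_zero] at h2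
  linarith

lemma fderiv_timeDeriv_eq (hD : IsOpen D)
    (hy : ContDiffOn ℝ 2 (fun q : Esp n × ℝ => y q.1 q.2) (D ×ˢ Icc 0 T))
    (hR : ContDiffOn ℝ 2 (fun q : Esp n × ℝ => R q.1 q.2) (D ×ˢ Icc 0 T))
    (heq : ∀ x ∈ D, ∀ t ∈ Ioo (0:ℝ) T,
      deriv (y x) t + ⟪H x, gradient (fun z => y z t) x⟫ + p₁ x * y x t = R x t * f x)
    {x : Esp n} {t : ℝ} (hx : x ∈ D) (ht : t ∈ Ioo 0 T) :
    fderiv ℝ (fun q : Esp n × ℝ => timeDeriv T y q.1 q.2) (x, t) (H x, 1)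
      = timeDeriv T R x t * f x - p₁ x * timeDeriv T y x t := by
  set Y := fun q : Esp n × ℝ => y q.1 q.2 with hY
  have htI : t ∈ Icc 0 T := ⟨ht.1.le, ht.2.le⟩
  have hYc : ContDiffAt ℝ 2 Y (x, t) := hy.contDiffAt (mem_nhds_prod_Icc hD hx ht)
  have hsymm := hYc.isSymmSndFDerivAt (by simp)
  have hY2 : HasFDerivAt (fderiv ℝ Y) (fderiv ℝ (fderiv ℝ Y) (x, t)) (x, t) :=
    ((hYc.fderiv_right (m := 1) (by norm_num)).differentiableAt one_ne_zero).hasFDerivAt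
  have hz : (fun q : Esp n × ℝ => timeDeriv T y q.1 q.2) =ᶠ[𝓝 (x, t)]
      fun q => fderiv ℝ Y q (0, 1) := by
    filter_upwards [prod_mem_nhds (hD.mem_nhds hx) (isOpen_Ioo.mem_nhds ht)] with q hq
    exact timeDeriv_eq_fderiv hD hy hq.1 hq.2
  have hz' : HasFDerivAt (fun q => fderiv ℝ Y q (0, 1))
      ((ContinuousLinearMap.apply ℝ ℝ ((0 : Esp n), (1 : ℝ))).comp
        (fderiv ℝ (fderiv ℝ Y) (x, t))) (x, t) :=
    (ContinuousLinearMap.apply ℝ ℝ ((0 : Esp n), (1 : ℝ))).hasFDerivAt.comp _ hY2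
  rw [hz.fderiv_eq, hz'.fderiv]
  simp only [ContinuousLinearMap.comp_apply, ContinuousLinearMap.apply_apply]
  rw [hsymm (H x, 1) (0, 1)]
  have hline : HasDerivAt (fun s : ℝ => (x, s)) ((0 : Esp n), (1 : ℝ)) t :=
    (hasDerivAt_const t x).prodMk (hasDerivAt_id t)
  have hL : HasDerivAt (fun s => fderiv ℝ Y (x, s) (H x, 1))
      (fderiv ℝ (fderiv ℝ Y) (x, t) (0, 1) (H x, 1)) t := by
    have h1 : HasDerivAt (fun s => fderiv ℝ Y (x, s)) (fderiv ℝ (fderiv ℝ Y) (x, t) (0, 1)) t :=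
      hY2.comp_hasDerivAt t hline
    simpa using h1.clm_apply (hasDerivAt_const t ((H x, 1) : Esp n × ℝ))
  have hnh := Icc_mem_nhds ht.1 ht.2
  have hRd := (hasDerivWithinAt_timeDeriv hR hx htI).hasDerivAt hnh
  have hyd := (hasDerivWithinAt_timeDeriv hy hx htI).hasDerivAt hnh
  have hRHS : HasDerivAt (fun s => fderiv ℝ Y (x, s) (H x, 1))
      (timeDeriv T R x t * f x - p₁ x * timeDeriv T y x t) t := by
    refine ((hRd.mul_const (f x)).sub (hyd.const_mul (p₁ x))).congr_of_eventuallyEq ?_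
    filter_upwards [isOpen_Ioo.mem_nhds ht] with s hs
    exact transport_eq_fderiv hD hy heq hx hs
  exact hL.unique hRHS

lemma timeDeriv_zero_eq (hT : 0 < T) (hD : IsOpen D)
    (hy : ContDiffOn ℝ 2 (fun q : Esp n × ℝ => y q.1 q.2) (D ×ˢ Icc 0 T))
    (hR : ContDiffOn ℝ 2 (fun q : Esp n × ℝ => R q.1 q.2) (D ×ˢ Icc 0 T))
    (heq : ∀ x ∈ D, ∀ t ∈ Ioo (0:ℝ) T,
      deriv (y x) t + ⟪H x, gradient (fun z => y z t) x⟫ + p₁ x * y x t = R x t * f x)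
    (hy0 : ∀ x ∈ D, y x 0 = 0) {x : Esp n} (hx : x ∈ D) :
    timeDeriv T y x 0 = R x 0 * f x := by
  set Y := fun q : Esp n × ℝ => y q.1 q.2 with hY
  have h0 : (0 : ℝ) ∈ Icc 0 T := ⟨le_rfl, hT.le⟩
  have hud : UniqueDiffOn ℝ (D ×ˢ Icc 0 T) := hD.uniqueDiffOn.prod (uniqueDiffOn_Icc hT)
  have hslice : ContinuousOn (fun s : ℝ => (x, s)) (Icc 0 T) := by fun_prop
  have hmaps : MapsTo (fun s : ℝ => (x, s)) (Icc 0 T) (D ×ˢ Icc 0 T) := fun s hs => ⟨hx, hs⟩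
  have hF : HasFDerivWithinAt Y (fderivWithin ℝ Y (D ×ˢ Icc 0 T) (x, 0)) (D ×ˢ Icc 0 T) (x, 0) :=
    ((hy.differentiableOn two_ne_zero) (x, 0) ⟨hx, h0⟩).hasFDerivWithinAt
  have hcL : ContinuousOn (fun s => fderivWithin ℝ Y (D ×ˢ Icc 0 T) (x, s) (H x, 1)) (Icc 0 T) :=
    ((hy.continuousOn_fderivWithin hud (by norm_num)).comp hslice hmaps).clm_apply continuousOn_const
  have hcR : ContinuousOn (fun s => R x s * f x - p₁ x * y x s) (Icc 0 T) :=
    ((hR.continuousOn.comp hslice hmaps).mul continuousOn_const).sub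
      (continuousOn_const.mul (hy.continuousOn.comp hslice hmaps))
  have hEq : EqOn (fun s => fderivWithin ℝ Y (D ×ˢ Icc 0 T) (x, s) (H x, 1))
      (fun s => R x s * f x - p₁ x * y x s) (Ioo 0 T) := by
    intro s hs
    simp only
    rw [fderivWithin_of_mem_nhds (mem_nhds_prod_Icc hD hx hs)]
    exact transport_eq_fderiv hD hy heq hx hs
  have hEq0 := hEq.of_subset_closure hcL hcR Ioo_subset_Icc_self
    (by rw [closure_Ioo hT.ne]) h0
  simp only [hy0 x hx, mul_zero, sub_zero] at hEq0
  have hspace : fderivWithin ℝ Y (D ×ˢ Icc 0 T) (x, 0) (H x, 0) = 0 := by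
    have hl : HasFDerivAt (fun z : Esp n => (z, (0 : ℝ))) (ContinuousLinearMap.inl ℝ (Esp n) ℝ) x :=
      hasFDerivAt_prodMk_left x 0
    have h1 : HasFDerivWithinAt (fun z => y z 0)
        ((fderivWithin ℝ Y (D ×ˢ Icc 0 T) (x, 0)).comp (ContinuousLinearMap.inl ℝ (Esp n) ℝ)) D x :=
      HasFDerivWithinAt.comp (g := Y) (f := fun z => (z, (0 : ℝ))) (t := D ×ˢ Icc 0 T) x hF
        hl.hasFDerivWithinAt fun z hz => ⟨hz, h0⟩
    have h2 : HasFDerivAt (fun z => y z 0) (0 : Esp n →L[ℝ] ℝ) x :=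
      (hasFDerivAt_const (0 : ℝ) x).congr_of_eventuallyEq (by
        filter_upwards [hD.mem_nhds hx] with z hz using hy0 z hz)
    have h3 := (h1.hasFDerivAt (hD.mem_nhds hx)).unique h2
    simpa using congrArg (fun L => L (H x)) h3
  have hsplit : ((H x, 1) : Esp n × ℝ) = (H x, 0) + (0, 1) := by simp
  rw [hsplit, map_add, hspace, zero_add] at hEq0
  rw [← hEq0, timeDeriv_eq_of_hasFDerivWithinAt hT hx h0 hF]

end Equation

/-! ### Differentiation of integrals along a flow -/

section Transport

variable {n : ℕ} {D K : Set (Esp n)} {J : Set ℝ} {Φ : Esp n × ℝ → ℝ} {H : Esp n → Esp n} {t : ℝ}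

lemma fderiv_eq_zero_of_eq_zero_off_prod (hK : IsClosed K) (h0 : ∀ x ∉ K, ∀ s, Φ (x, s) = 0)
    {x : Esp n} (hx : x ∉ K) : fderiv ℝ Φ (x, t) = 0 := by
  have : Φ =ᶠ[𝓝 (x, t)] fun _ => 0 := by
    filter_upwards [prod_mem_nhds (hK.isOpen_compl.mem_nhds hx) univ_mem] with q hq
    exact h0 q.1 hq.1 q.2
  rw [this.fderiv_eq]
  simp

lemma hasDerivAt_setIntegral_time (hD : IsOpen D) (hJ : IsOpen J) (hK : IsCompact K)
    (hKD : K ⊆ D) (hΦ : ContDiffOn ℝ 1 Φ (D ×ˢ J)) (h0 : ∀ x ∉ K, ∀ s, Φ (x, s) = 0)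
    (ht : t ∈ J) :
    HasDerivAt (fun s => ∫ x in D, Φ (x, s)) (∫ x in D, fderiv ℝ Φ (x, t) (0, 1)) t := by
  have hDJ : IsOpen (D ×ˢ J) := hD.prod hJ
  have hrestr : ∀ g : Esp n → ℝ, (∀ x ∉ K, g x = 0) → ∫ x in D, g x = ∫ x in K, g x := fun g hg =>
    setIntegral_eq_of_subset_of_forall_sdiff_eq_zero hD.measurableSet hKD fun x hx => hg x hx.2
  have h1 : (fun s => ∫ x in D, Φ (x, s)) = fun s => ∫ x in K, Φ (x, s) := by
    ext s
    exact hrestr _ fun x hx => h0 x hx s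
  rw [h1, hrestr _ fun x hx => by rw [fderiv_eq_zero_of_eq_zero_off_prod hK.isClosed h0 hx]; simp]
  obtain ⟨δ, hδ, hδJ⟩ := Metric.nhds_basis_closedBall.mem_iff.1 (hJ.mem_nhds ht)
  have hcf : ContinuousOn (fun q => fderiv ℝ Φ q (0, 1)) (D ×ˢ J) :=
    (hΦ.continuousOn_fderiv_of_isOpen hDJ le_rfl).clm_apply continuousOn_const
  obtain ⟨B, hB⟩ := (hK.prod (isCompact_closedBall t δ)).exists_bound_of_continuousOn
    (hcf.mono (prod_mono hKD hδJ))
  have hslice : ∀ s ∈ J, ContinuousOn (fun x => ((x, s) : Esp n × ℝ)) K ∧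
      MapsTo (fun x => ((x, s) : Esp n × ℝ)) K (D ×ˢ J) := fun s hs =>
    ⟨by fun_prop, fun x hx => ⟨hKD hx, hs⟩⟩
  have hIntΦ : ∀ s ∈ J, IntegrableOn (fun x => Φ (x, s)) K := fun s hs =>
    (hΦ.continuousOn.comp (hslice s hs).1 (hslice s hs).2).integrableOn_compact hK
  refine (hasDerivAt_integral_of_dominated_loc_of_deriv_le (bound := fun _ => B)
    (F := fun s x => Φ (x, s)) (F' := fun s x => fderiv ℝ Φ (x, s) (0, 1))
    (closedBall_mem_nhds t hδ) ?_ (hIntΦ t ht) ?_ ?_ ?_ ?_).2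
  · filter_upwards [hJ.mem_nhds ht] with s hs using (hIntΦ s hs).aestronglyMeasurable
  · exact ((hcf.comp (hslice t ht).1 (hslice t ht).2).integrableOn_compact hK).aestronglyMeasurable
  · filter_upwards [ae_restrict_mem hK.measurableSet] with x hx s hs
    exact hB (x, s) ⟨hx, hs⟩
  · exact integrableOn_const hK.measure_lt_top.ne
  · filter_upwards [ae_restrict_mem hK.measurableSet] with x hx s hs
    have hd : HasFDerivAt Φ (fderiv ℝ Φ (x, s)) (x, s) :=
      ((hΦ.contDiffAt (hDJ.mem_nhds ⟨hKD hx, hδJ hs⟩)).differentiableAt one_ne_zero).hasFDerivAt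
    have hline : HasDerivAt (fun s : ℝ => (x, s)) ((0 : Esp n), (1 : ℝ)) s :=
      (hasDerivAt_const s x).prodMk (hasDerivAt_id s)
    exact hd.comp_hasDerivAt s hline

lemma hasDerivAt_setIntegral_transport (hD : IsOpen D) (hJ : IsOpen J) (hK : IsCompact K)
    (hKD : K ⊆ D) (hΦ : ContDiffOn ℝ 1 Φ (D ×ˢ J)) (h0 : ∀ x ∉ K, ∀ s, Φ (x, s) = 0)
    (hH : ContDiffOn ℝ 1 H D) (ht : t ∈ J) :
    HasDerivAt (fun s => ∫ x in D, Φ (x, s))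
      (∫ x in D, (fderiv ℝ Φ (x, t) (H x, 1) + Φ (x, t) * divergence H x)) t := by
  have hDJ : IsOpen (D ×ˢ J) := hD.prod hJ
  have hW : ContDiffOn ℝ 1 (fun x => Φ (x, t)) D :=
    hΦ.comp (contDiff_id.prodMk contDiff_const).contDiffOn fun x hx => ⟨hx, ht⟩
  have hdiv := setIntegral_fderiv_apply_add_mul_divergence hD hK hKD hW (fun x hx => h0 x hx t) hH
  have hcf : ContinuousOn (fun x => fderiv ℝ Φ (x, t)) D :=
    (hΦ.continuousOn_fderiv_of_isOpen hDJ le_rfl).comp (by fun_prop) fun x hx => ⟨hx, ht⟩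
  have hWf : ∀ x ∈ D, fderiv ℝ (fun x => Φ (x, t)) x (H x) = fderiv ℝ Φ (x, t) (H x, 0) := by
    intro x hx
    have hd : HasFDerivAt Φ (fderiv ℝ Φ (x, t)) (x, t) :=
      ((hΦ.contDiffAt (hDJ.mem_nhds ⟨hx, ht⟩)).differentiableAt one_ne_zero).hasFDerivAt
    have hl : HasFDerivAt (fun z : Esp n => (z, t)) (ContinuousLinearMap.inl ℝ (Esp n) ℝ) x :=
      hasFDerivAt_prodMk_left x t
    have hs : HasFDerivAt (fun z => Φ (z, t))
        ((fderiv ℝ Φ (x, t)).comp (ContinuousLinearMap.inl ℝ (Esp n) ℝ)) x :=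
      HasFDerivAt.comp (g := Φ) (f := fun z => (z, t)) x hd hl
    rw [hs.fderiv]
    simp
  have hsum : ∫ x in D, (fderiv ℝ Φ (x, t) (H x, 1) + Φ (x, t) * divergence H x)
      = ∫ x in D, fderiv ℝ Φ (x, t) (0, 1) := by
    have hI1 : Integrable fun x => fderiv ℝ Φ (x, t) (0, 1) :=
      integrable_of_continuousOn_of_eq_zero hK hKD (hcf.clm_apply continuousOn_const)
        fun x hx => by rw [fderiv_eq_zero_of_eq_zero_off_prod hK.isClosed h0 hx]; simp
    have hI2 : Integrable fun x => fderiv ℝ Φ (x, t) (H x, 0) + Φ (x, t) * divergence H x :=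
      integrable_of_continuousOn_of_eq_zero hK hKD
        ((hcf.clm_apply (hH.continuousOn.prodMk continuousOn_const)).add
          (hW.continuousOn.mul (continuousOn_divergence hD hH)))
        fun x hx => by rw [fderiv_eq_zero_of_eq_zero_off_prod hK.isClosed h0 hx, h0 x hx]; simp
    have hz : ∫ x in D, (fderiv ℝ Φ (x, t) (H x, 0) + Φ (x, t) * divergence H x) = 0 :=
      (setIntegral_congr_fun hD.measurableSet fun x hx => by simp only [hWf x hx]).trans hdiv
    rw [← add_zero (∫ x in D, fderiv ℝ Φ (x, t) (0, 1)), ← hz,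
      ← integral_add hI1.integrableOn hI2.integrableOn]
    refine setIntegral_congr_fun hD.measurableSet fun x _ => ?_
    have hsplit : ((H x, 1) : Esp n × ℝ) = (0, 1) + (H x, 0) := by simp
    simp only [hsplit, map_add]
    ring
  rw [hsum]
  exact hasDerivAt_setIntegral_time hD hJ hK hKD hΦ h0 ht

/-- If the production of `Φ` along the flow of `H` is at most `φ`, the integral of `Φ` grows at most
by the integral of `φ`. -/
lemma setIntegral_sub_le_of_transport_le {T : ℝ} {φ : ℝ → ℝ} (hD : IsOpen D)
    (hK : IsCompact K) (hKD : K ⊆ D) (hΦc : ContinuousOn Φ (D ×ˢ Icc 0 T))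
    (hΦ : ContDiffOn ℝ 1 Φ (D ×ˢ Ioo 0 T)) (h0 : ∀ x ∉ K, ∀ s, Φ (x, s) = 0)
    (hH : ContDiffOn ℝ 1 H D) (hφ : IntegrableOn φ (Icc 0 T))
    (hle : ∀ s ∈ Ioo 0 T,
      ∫ x in D, (fderiv ℝ Φ (x, s) (H x, 1) + Φ (x, s) * divergence H x) ≤ φ s)
    (ht : t ∈ Icc 0 T) :
    (∫ x in D, Φ (x, t)) - ∫ x in D, Φ (x, 0) ≤ ∫ s in (0)..t, φ s := by
  have hcont : ContinuousOn (fun s => ∫ x in D, Φ (x, s)) (Icc 0 T) := by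
    have h1 : (fun s => ∫ x in D, Φ (x, s)) = fun s => ∫ x in K, Φ (x, s) := by
      ext s
      exact setIntegral_eq_of_subset_of_forall_sdiff_eq_zero hD.measurableSet hKD
        fun x hx => h0 x hx.2 s
    rw [h1]
    obtain ⟨B, hB⟩ := (hK.prod (isCompact_Icc (a := (0 : ℝ)) (b := T))).exists_bound_of_continuousOn
      (hΦc.mono (prod_mono hKD subset_rfl))
    refine continuousOn_of_dominated (bound := fun _ => B) (fun s hs => ?_) (fun s hs => ?_)
      (integrableOn_const hK.measure_lt_top.ne) ?_
    · exact ((hΦc.comp (t := D ×ˢ Icc 0 T) (f := fun x => (x, s)) (s := K) (by fun_prop)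
        fun x hx => ⟨hKD hx, hs⟩).integrableOn_compact hK).aestronglyMeasurable
    · filter_upwards [ae_restrict_mem hK.measurableSet] with x hx using hB (x, s) ⟨hx, hs⟩
    · filter_upwards [ae_restrict_mem hK.measurableSet] with x hx
      exact hΦc.comp (by fun_prop) fun s hs => ⟨hKD hx, hs⟩
  have hsub : Icc 0 t ⊆ Icc 0 T := Icc_subset_Icc_right ht.2
  have hsub' : Ioo 0 t ⊆ Ioo 0 T := Ioo_subset_Ioo_right ht.2
  exact intervalIntegral.sub_le_integral_of_hasDeriv_right_of_le ht.1 (hcont.mono hsub)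
    (fun s hs => (hasDerivAt_setIntegral_transport hD isOpen_Ioo hK hKD hΦ h0 hH
      (hsub' hs)).hasDerivWithinAt) (hφ.mono_set hsub) fun s hs => hle s (hsub' hs)

end Transport

/-! ### The flux through the two graphs -/

lemma one_le_omegaW {d : ℕ} {c : Esp d → ℝ} {x' : Esp d} : 1 ≤ omegaW d c x' :=
  Real.one_le_sqrt.2 (by nlinarith [sq_nonneg ‖gradient c x'‖])

lemma continuousOn_omegaW_and_bounded {d : ℕ} {ρ : ℝ} (hρ : 0 < ρ) {c : Esp d → ℝ}
    (hc : ContDiffOn ℝ 1 c (closedBall 0 ρ)) :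
    ContinuousOn (omegaW d c) (ball 0 ρ) ∧ ∃ B, ∀ x' ∈ ball 0 ρ, omegaW d c x' ≤ B := by
  have hInt : (interior (closedBall (0 : Esp d) ρ)).Nonempty :=
    ⟨0, ball_subset_interior_closedBall (mem_ball_self hρ)⟩
  have hfc : ContinuousOn (fderivWithin ℝ c (closedBall 0 ρ)) (closedBall 0 ρ) :=
    hc.continuousOn_fderivWithin (uniqueDiffOn_convex (convex_closedBall 0 ρ) hInt) le_rfl
  have hcont : ContinuousOn (fun x' => Real.sqrt (1 + ‖fderivWithin ℝ c (closedBall 0 ρ) x'‖ ^ 2))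
      (closedBall 0 ρ) :=
    Real.continuous_sqrt.comp_continuousOn (continuousOn_const.add (hfc.norm.pow 2))
  have heq : ∀ x' ∈ ball (0 : Esp d) ρ,
      omegaW d c x' = Real.sqrt (1 + ‖fderivWithin ℝ c (closedBall 0 ρ) x'‖ ^ 2) := by
    intro x' hx'
    rw [omegaW, gradient, LinearIsometryEquiv.norm_map,
      fderivWithin_of_mem_nhds (mem_of_superset (isOpen_ball.mem_nhds hx') ball_subset_closedBall)]
  refine ⟨(hcont.mono ball_subset_closedBall).congr heq, ?_⟩
  obtain ⟨B, hB⟩ := (isCompact_closedBall (0 : Esp d) ρ).exists_bound_of_continuousOn hcont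
  exact ⟨B, fun x' hx' => heq x' hx' ▸ (le_abs_self _).trans (hB x' (ball_subset_closedBall hx'))⟩

lemma integrableOn_omegaW {d : ℕ} {ρ : ℝ} (hρ : 0 < ρ) {c : Esp d → ℝ}
    (hc : ContDiffOn ℝ 1 c (closedBall 0 ρ)) : IntegrableOn (omegaW d c) (ball 0 ρ) := by
  obtain ⟨h1, B, hB⟩ := continuousOn_omegaW_and_bounded hρ hc
  refine Integrable.mono' (integrableOn_const measure_ball_lt_top.ne : IntegrableOn (fun _ => B) _ _)
    (h1.aestronglyMeasurable measurableSet_ball) ?_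
  filter_upwards [ae_restrict_mem measurableSet_ball] with x' hx'
  rw [Real.norm_of_nonneg (zero_le_one.trans one_le_omegaW)]
  exact hB _ hx'

/-- The integral of `g` over the upper and the lower graph bounding `graphDomain d ρ ℓ ℓt`. -/
def boundaryFlux (d : ℕ) (ρ : ℝ) (ℓ ℓt : Esp d → ℝ) (g : Esp (d+1) → ℝ) : ℝ :=
  ∫ x' in ball (0 : Esp d) ρ, (g (graphMk d x' (ℓ x')) * omegaW d ℓ x'
    + g (graphMk d x' (ℓ x' - ℓt x')) * omegaW d (fun z => ℓ z - ℓt z) x')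

section Flux

variable {d : ℕ} {ρ : ℝ} {ℓ ℓt : Esp d → ℝ}

lemma upper_mem_closure (hpos : ∀ x' : Esp d, ‖x'‖ < ρ → 0 < ℓt x') {x' : Esp d}
    (hx' : x' ∈ ball 0 ρ) : graphMk d x' (ℓ x') ∈ closure (graphDomain d ρ ℓ ℓt) := by
  rw [mem_ball_zero_iff] at hx'
  exact graphMk_mem_closure_graphDomain hx' (hpos x' hx') ⟨by linarith [hpos x' hx'], le_rfl⟩

lemma lower_mem_closure (hpos : ∀ x' : Esp d, ‖x'‖ < ρ → 0 < ℓt x') {x' : Esp d}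
    (hx' : x' ∈ ball 0 ρ) : graphMk d x' (ℓ x' - ℓt x') ∈ closure (graphDomain d ρ ℓ ℓt) := by
  rw [mem_ball_zero_iff] at hx'
  exact graphMk_mem_closure_graphDomain hx' (hpos x' hx') ⟨le_rfl, by linarith [hpos x' hx']⟩

lemma integrableOn_graph_mul_omegaW {K : Set (Esp (d+1))} (hK : IsCompact K) (hρ : 0 < ρ)
    {c : Esp d → ℝ} (hc : ContDiffOn ℝ 1 c (closedBall 0 ρ))
    (hcK : ∀ x' ∈ ball 0 ρ, graphMk d x' (c x') ∈ K) {g : Esp (d+1) → ℝ} (hg : ContinuousOn g K) :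
    IntegrableOn (fun x' => g (graphMk d x' (c x')) * omegaW d c x') (ball 0 ρ) := by
  obtain ⟨B, hB⟩ := hK.exists_bound_of_continuousOn hg
  have hgc : ContinuousOn (fun x' => g (graphMk d x' (c x'))) (ball 0 ρ) :=
    hg.comp ((continuous_graphMk d).comp_continuousOn
      (continuousOn_id.prodMk (hc.continuousOn.mono ball_subset_closedBall))) hcK
  refine Integrable.bdd_mul (c := B) (integrableOn_omegaW hρ hc)
    (hgc.aestronglyMeasurable measurableSet_ball) ?_
  filter_upwards [ae_restrict_mem measurableSet_ball] with x' hx' using hB _ (hcK _ hx')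

/-- The standing assumptions on the two graphs. -/
structure IsGraphPair (d : ℕ) (ρ : ℝ) (ℓ ℓt : Esp d → ℝ) : Prop where
  radius_pos : 0 < ρ
  contDiffOn_upper : ContDiffOn ℝ 1 ℓ (closedBall 0 ρ)
  contDiffOn_thickness : ContDiffOn ℝ 1 ℓt (closedBall 0 ρ)
  thickness_pos : ∀ x' : Esp d, ‖x'‖ < ρ → 0 < ℓt x'
  thickness_eq_zero : ∀ x' : Esp d, ‖x'‖ = ρ → ℓt x' = 0

namespace IsGraphPair

lemma isCompact_closure (hG : IsGraphPair d ρ ℓ ℓt) : IsCompact (closure (graphDomain d ρ ℓ ℓt)) :=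
  (isBounded_graphDomain hG.contDiffOn_upper.continuousOn
    hG.contDiffOn_thickness.continuousOn).isCompact_closure

lemma isOpen (hG : IsGraphPair d ρ ℓ ℓt) : IsOpen (graphDomain d ρ ℓ ℓt) :=
  isOpen_graphDomain hG.contDiffOn_upper.continuousOn hG.contDiffOn_thickness.continuousOn

lemma integrableOn_of_continuousOn (hG : IsGraphPair d ρ ℓ ℓt) {g : Esp (d+1) → ℝ}
    (hg : ContinuousOn g (closure (graphDomain d ρ ℓ ℓt))) :
    IntegrableOn g (graphDomain d ρ ℓ ℓt) :=
  (hg.integrableOn_compact hG.isCompact_closure).mono_set subset_closure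

lemma contDiffOn_lower (hG : IsGraphPair d ρ ℓ ℓt) :
    ContDiffOn ℝ 1 (fun z => ℓ z - ℓt z) (closedBall 0 ρ) :=
  hG.contDiffOn_upper.sub hG.contDiffOn_thickness

lemma integrableOn_upper (hG : IsGraphPair d ρ ℓ ℓt) {g : Esp (d+1) → ℝ}
    (hg : ContinuousOn g (closure (graphDomain d ρ ℓ ℓt))) :
    IntegrableOn (fun x' => g (graphMk d x' (ℓ x')) * omegaW d ℓ x') (ball 0 ρ) :=
  integrableOn_graph_mul_omegaW hG.isCompact_closure hG.radius_pos hG.contDiffOn_upper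
    (fun _ hx' => upper_mem_closure hG.thickness_pos hx') hg

lemma integrableOn_lower (hG : IsGraphPair d ρ ℓ ℓt) {g : Esp (d+1) → ℝ}
    (hg : ContinuousOn g (closure (graphDomain d ρ ℓ ℓt))) :
    IntegrableOn (fun x' => g (graphMk d x' (ℓ x' - ℓt x')) * omegaW d (fun z => ℓ z - ℓt z) x')
      (ball 0 ρ) :=
  integrableOn_graph_mul_omegaW (c := fun z => ℓ z - ℓt z) hG.isCompact_closure hG.radius_pos
    hG.contDiffOn_lower (fun _ hx' => lower_mem_closure hG.thickness_pos hx') hg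

lemma boundaryFlux_eq (hG : IsGraphPair d ρ ℓ ℓt) {g : Esp (d+1) → ℝ}
    (hg : ContinuousOn g (closure (graphDomain d ρ ℓ ℓt))) :
    boundaryFlux d ρ ℓ ℓt g = (∫ x' in ball (0 : Esp d) ρ, g (graphMk d x' (ℓ x')) * omegaW d ℓ x')
      + ∫ x' in ball (0 : Esp d) ρ,
        g (graphMk d x' (ℓ x' - ℓt x')) * omegaW d (fun z => ℓ z - ℓt z) x' :=
  integral_add (hG.integrableOn_upper hg) (hG.integrableOn_lower hg)

lemma boundaryFlux_nonneg (hG : IsGraphPair d ρ ℓ ℓt) {g : Esp (d+1) → ℝ}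
    (hg : ∀ x ∈ closure (graphDomain d ρ ℓ ℓt), 0 ≤ g x) : 0 ≤ boundaryFlux d ρ ℓ ℓt g := by
  refine setIntegral_nonneg measurableSet_ball fun x' hx' => ?_
  exact add_nonneg
    (mul_nonneg (hg _ (upper_mem_closure hG.thickness_pos hx')) (zero_le_one.trans one_le_omegaW))
    (mul_nonneg (hg _ (lower_mem_closure hG.thickness_pos hx')) (zero_le_one.trans one_le_omegaW))

lemma boundaryFlux_add_const (hG : IsGraphPair d ρ ℓ ℓt) {g : Esp (d+1) → ℝ}
    (hg : ContinuousOn g (closure (graphDomain d ρ ℓ ℓt))) (η : ℝ) :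
    boundaryFlux d ρ ℓ ℓt (fun x => g x + η)
      = boundaryFlux d ρ ℓ ℓt g + η * boundaryFlux d ρ ℓ ℓt fun _ => 1 := by
  have h1 : ContinuousOn (fun _ : Esp (d+1) => (1 : ℝ)) (closure (graphDomain d ρ ℓ ℓt)) :=
    continuousOn_const
  unfold boundaryFlux
  rw [← integral_const_mul]
  refine Eq.trans (integral_congr_ae (Eventually.of_forall fun x' => ?_))
    (integral_add ((hG.integrableOn_upper hg).add (hG.integrableOn_lower hg))
      (((hG.integrableOn_upper h1).add (hG.integrableOn_lower h1)).const_mul η))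
  simp only
  ring

lemma continuousOn_boundaryFlux (hG : IsGraphPair d ρ ℓ ℓt) {T : ℝ} {w : Esp (d+1) × ℝ → ℝ}
    (hw : ContinuousOn w (closure (graphDomain d ρ ℓ ℓt) ×ˢ Icc 0 T)) :
    ContinuousOn (fun t => boundaryFlux d ρ ℓ ℓt fun x => w (x, t)) (Icc 0 T) := by
  set K := closure (graphDomain d ρ ℓ ℓt) with hKdef
  have h1 : ContinuousOn (fun _ : Esp (d+1) => (1 : ℝ)) K := continuousOn_const
  have hwt : ∀ t ∈ Icc 0 T, ContinuousOn (fun x => w (x, t)) K := fun t ht =>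
    hw.comp (by fun_prop) fun x hx => ⟨hx, ht⟩
  have hwx : ∀ x ∈ K, ContinuousOn (fun t => w (x, t)) (Icc 0 T) := fun x hx =>
    hw.comp (by fun_prop) fun t ht => ⟨hx, ht⟩
  obtain ⟨B, hB⟩ := (hG.isCompact_closure.prod (isCompact_Icc (a := (0 : ℝ))
    (b := T))).exists_bound_of_continuousOn hw
  refine continuousOn_of_dominated
    (bound := fun x' => B * (1 * omegaW d ℓ x' + 1 * omegaW d (fun z => ℓ z - ℓt z) x'))
    (fun t ht => ((hG.integrableOn_upper (hwt t ht)).add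
      (hG.integrableOn_lower (hwt t ht))).aestronglyMeasurable) (fun t ht => ?_)
    (((hG.integrableOn_upper h1).add (hG.integrableOn_lower h1)).const_mul B) ?_
  · filter_upwards [ae_restrict_mem measurableSet_ball] with x' hx'
    have hω1 : 0 ≤ omegaW d ℓ x' := zero_le_one.trans one_le_omegaW
    have hω2 : 0 ≤ omegaW d (fun z => ℓ z - ℓt z) x' := zero_le_one.trans one_le_omegaW
    refine (norm_add_le _ _).trans ?_
    rw [norm_mul, norm_mul, Real.norm_of_nonneg hω1, Real.norm_of_nonneg hω2, one_mul, one_mul,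
      mul_add]
    gcongr
    · exact hB (_, t) ⟨upper_mem_closure hG.thickness_pos hx', ht⟩
    · exact hB (_, t) ⟨lower_mem_closure hG.thickness_pos hx', ht⟩
  · filter_upwards [ae_restrict_mem measurableSet_ball] with x' hx'
    exact ((hwx _ (upper_mem_closure hG.thickness_pos hx')).mul continuousOn_const).add
      ((hwx _ (lower_mem_closure hG.thickness_pos hx')).mul continuousOn_const)

lemma setIntegral_strips_le (hG : IsGraphPair d ρ ℓ ℓt) {g : Esp (d+1) → ℝ} {ε : ℝ} (hε : 0 < ε)
    (hg : ContinuousOn g (closure (graphDomain d ρ ℓ ℓt)))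
    (hg0 : ∀ x ∈ closure (graphDomain d ρ ℓ ℓt), 0 ≤ g x) :
    let F := fun x => (graphStrip d ρ ε fun z => ℓ z - 2 * ε).indicator
        (fun x => g (graphMk d (horiz d x) (ℓ (horiz d x))) * omegaW d ℓ (horiz d x)) x
      + (graphStrip d ρ ε fun z => ℓ z - ℓt z + ε).indicator
        (fun x => g (graphMk d (horiz d x) (ℓ (horiz d x) - ℓt (horiz d x)))
          * omegaW d (fun z => ℓ z - ℓt z) (horiz d x)) x
    IntegrableOn F (graphDomain d ρ ℓ ℓt) ∧
      ∫ x in graphDomain d ρ ℓ ℓt, F x ≤ ε * boundaryFlux d ρ ℓ ℓt g := by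
  intro F
  have hc1 : ContinuousOn (fun z => ℓ z - 2 * ε) (ball 0 ρ) :=
    (hG.contDiffOn_upper.continuousOn.mono ball_subset_closedBall).sub continuousOn_const
  have hc2 : ContinuousOn (fun z => ℓ z - ℓt z + ε) (ball 0 ρ) :=
    (hG.contDiffOn_lower.continuousOn.mono ball_subset_closedBall).add continuousOn_const
  obtain ⟨hI1, hE1⟩ := integrableOn_graphStrip_and_setIntegral_eq hε.le hc1 (hG.integrableOn_upper hg)
  obtain ⟨hI2, hE2⟩ := integrableOn_graphStrip_and_setIntegral_eq hε.le hc2 (hG.integrableOn_lower hg)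
  have hm1 := measurableSet_graphStrip (ε := ε) hc1
  have hm2 := measurableSet_graphStrip (ε := ε) hc2
  have hF1 := hI1.integrable_indicator hm1
  have hF2 := hI2.integrable_indicator hm2
  have hF : Integrable F := hF1.add hF2
  refine ⟨hF.integrableOn, ?_⟩
  calc ∫ x in graphDomain d ρ ℓ ℓt, F x ≤ ∫ x, F x := by
        refine setIntegral_le_integral hF (Eventually.of_forall fun x => add_nonneg ?_ ?_)
        · exact indicator_nonneg (fun x hx => mul_nonneg (hg0 _ (upper_mem_closure hG.thickness_pos
            hx.1)) (zero_le_one.trans one_le_omegaW)) x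
        · exact indicator_nonneg (fun x hx => mul_nonneg (hg0 _ (lower_mem_closure hG.thickness_pos
            hx.1)) (zero_le_one.trans one_le_omegaW)) x
    _ = ε * boundaryFlux d ρ ℓ ℓt g := by
        rw [integral_add hF1 hF2, integral_indicator hm1, integral_indicator hm2, hE1, hE2,
          hG.boundaryFlux_eq hg, mul_add]

/-- The mass of `w` seen by the gradient of the cutoff is controlled by its boundary flux. -/
lemma exists_cutoff_flux_le (hG : IsGraphPair d ρ ℓ ℓt) :
    ∃ C > 0, ∀ (T M : ℝ) (w : Esp (d+1) × ℝ → ℝ) (H : Esp (d+1) → Esp (d+1)),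
      ContinuousOn w (closure (graphDomain d ρ ℓ ℓt) ×ˢ Icc 0 T) →
      (∀ q ∈ closure (graphDomain d ρ ℓ ℓt) ×ˢ Icc 0 T, 0 ≤ w q) →
      (∀ x ∈ graphDomain d ρ ℓ ℓt, ‖H x‖ ≤ M) → 0 ≤ M → ∀ η > 0, ∀ᶠ ε in 𝓝[>] 0, ∀ t ∈ Icc 0 T,
      ∃ F : Esp (d+1) → ℝ, IntegrableOn F (graphDomain d ρ ℓ ℓt) ∧
        (∀ x ∈ graphDomain d ρ ℓ ℓt, |fderiv ℝ (graphCutoff d ρ ℓ ℓt ε) x (H x)| * w (x, t) ≤ F x) ∧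
        ∫ x in graphDomain d ρ ℓ ℓt, F x ≤ C * M *
          (boundaryFlux d ρ ℓ ℓt (fun x => w (x, t)) + η * boundaryFlux d ρ ℓ ℓt fun _ => 1) := by
  obtain ⟨C, hC, hCle⟩ := exists_abs_fderiv_graphCutoff_le
  refine ⟨C, hC, fun T M w H hw hw0 hHM hM η hη => ?_⟩
  set K := closure (graphDomain d ρ ℓ ℓt) with hKdef
  obtain ⟨δ, hδ, hδw⟩ := Metric.uniformContinuousOn_iff.1
    ((hG.isCompact_closure.prod (isCompact_Icc (a := (0 : ℝ)) (b := T))).uniformContinuousOn_of_continuous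
      hw) η hη
  filter_upwards [Ioo_mem_nhdsGT (half_pos hδ)] with ε hε t ht
  have hwt : ContinuousOn (fun x => w (x, t)) K := hw.comp (by fun_prop) fun x hx => ⟨hx, ht⟩
  have hnear : ∀ x ∈ graphDomain d ρ ℓ ℓt, ∀ r, graphMk d (horiz d x) r ∈ K →
      |vert d x - r| ≤ 2 * ε → w (x, t) ≤ w (graphMk d (horiz d x) r, t) + η := by
    intro x hx r hr hle
    have hdist : dist ((x, t) : Esp (d+1) × ℝ) (graphMk d (horiz d x) r, t) < δ := by
      rw [Prod.dist_eq, dist_self, max_eq_left dist_nonneg, dist_eq_norm]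
      have hx' : ‖x - graphMk d (horiz d x) r‖ = |vert d x - r| := by
        rw [← norm_graphMk_sub, graphMk_horiz_vert]
      linarith [hε.2]
    have h := hδw (x, t) ⟨subset_closure hx, ht⟩ (graphMk d (horiz d x) r, t) ⟨hr, ht⟩ hdist
    rw [Real.dist_eq] at h
    linarith [(abs_lt.1 h).2]
  obtain ⟨hFI, hFle⟩ := hG.setIntegral_strips_le hε.1 (g := fun x => w (x, t) + η)
    (hwt.add continuousOn_const) fun x hx => add_nonneg (hw0 (x, t) ⟨hx, ht⟩) hη.le
  refine ⟨_, hFI.const_mul (C / ε * M), fun x hx => ?_, ?_⟩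
  · have h1 := hCle d ρ ℓ ℓt hG.contDiffOn_upper hG.contDiffOn_thickness ε hε.1 x hx (H x)
    have hw0x := hw0 (x, t) ⟨subset_closure hx, ht⟩
    have hxb : horiz d x ∈ ball 0 ρ := by simpa using (mem_graphDomain_iff.1 hx).1
    have hε0 := hε.1
    have hω : ∀ c : Esp d → ℝ, 0 ≤ omegaW d c (horiz d x) := fun c =>
      zero_le_one.trans one_le_omegaW
    refine (mul_le_mul_of_nonneg_right h1 hw0x).trans ?_
    rw [mul_assoc, mul_assoc, mul_assoc]
    refine mul_le_mul_of_nonneg_left ?_ (by positivity)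
    refine mul_le_mul (hHM x hx) ?_ ?_ hM
    · rw [add_mul]
      refine add_le_add ?_ ?_
      · by_cases hs : x ∈ graphStrip d ρ ε fun z => ℓ z - 2 * ε
        · rw [indicator_of_mem hs, indicator_of_mem hs, mul_comm]
          refine mul_le_mul_of_nonneg_right (hnear x hx _ (upper_mem_closure hG.thickness_pos hxb) ?_)
            (hω _)
          have h2 := hs.2.1
          have h3 := hs.2.2
          exact abs_le.2 ⟨by linarith, by linarith⟩
        · rw [indicator_of_notMem hs, indicator_of_notMem hs, zero_mul]
      · by_cases hs : x ∈ graphStrip d ρ ε fun z => ℓ z - ℓt z + ε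
        · rw [indicator_of_mem hs, indicator_of_mem hs, mul_comm]
          refine mul_le_mul_of_nonneg_right (hnear x hx _ (lower_mem_closure hG.thickness_pos hxb) ?_)
            (hω _)
          have h2 := hs.2.1
          have h3 := hs.2.2
          exact abs_le.2 ⟨by linarith, by linarith⟩
        · rw [indicator_of_notMem hs, indicator_of_notMem hs, zero_mul]
    · exact mul_nonneg (add_nonneg (indicator_nonneg (fun _ _ => zero_le_one.trans one_le_omegaW) x)
        (indicator_nonneg (fun _ _ => zero_le_one.trans one_le_omegaW) x)) hw0x
  · rw [integral_const_mul, ← hG.boundaryFlux_add_const hwt]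
    refine (mul_le_mul_of_nonneg_left hFle (by have := hε.1; positivity)).trans_eq ?_
    have := hε.1.ne'
    field_simp

end IsGraphPair

end Flux

/-! ### The weighted energy inequality -/

lemma continuousOn_setIntegral_time {n : ℕ} {D : Set (Esp n)} (hD : IsOpen D)
    (hK : IsCompact (closure D)) {T : ℝ} {w : Esp n × ℝ → ℝ}
    (hw : ContinuousOn w (closure D ×ˢ Icc 0 T)) :
    ContinuousOn (fun t => ∫ x in D, w (x, t)) (Icc 0 T) := by
  obtain ⟨B, hB⟩ := (hK.prod (isCompact_Icc (a := (0 : ℝ)) (b := T))).exists_bound_of_continuousOn hw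
  refine continuousOn_of_dominated (bound := fun _ => B) (fun t ht => ?_) (fun t ht => ?_)
    (integrableOn_const ((measure_mono subset_closure).trans_lt hK.measure_lt_top).ne) ?_
  · exact (hw.comp (f := fun x => (x, t)) (s := D) (by fun_prop)
      fun x hx => ⟨subset_closure hx, ht⟩).aestronglyMeasurable hD.measurableSet
  · filter_upwards [ae_restrict_mem hD.measurableSet] with x hx
    exact hB (x, t) ⟨subset_closure hx, ht⟩
  · filter_upwards [ae_restrict_mem hD.measurableSet] with x hx
    exact hw.comp (by fun_prop) fun t ht => ⟨subset_closure hx, ht⟩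

/-- The weight `e^{-λ t + σ ψ(x)}`. -/
def expWeight {n : ℕ} (lam σ : ℝ) (ψ : Esp n → ℝ) (q : Esp n × ℝ) : ℝ :=
  Real.exp (-lam * q.2 + σ * ψ q.1)

lemma fderiv_cutoff_mul_sq_mul_expWeight {n : ℕ} {χ ψ : Esp n → ℝ} {z : Esp n × ℝ → ℝ}
    {lam σ κ : ℝ} {x v : Esp n} {t : ℝ} (hχ : DifferentiableAt ℝ χ x)
    (hψ : DifferentiableAt ℝ ψ x) (hz : DifferentiableAt ℝ z (x, t)) :
    fderiv ℝ (fun q : Esp n × ℝ => κ * (χ q.1 * (z q ^ 2 * expWeight lam σ ψ q))) (x, t) (v, 1)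
      = κ * (fderiv ℝ χ x v * (z (x, t) ^ 2 * expWeight lam σ ψ (x, t))
        + χ x * expWeight lam σ ψ (x, t) * (2 * z (x, t) * fderiv ℝ z (x, t) (v, 1)
          + z (x, t) ^ 2 * (-lam + σ * fderiv ℝ ψ x v))) := by
  have hline : HasDerivAt (fun s : ℝ => ((x, t) : Esp n × ℝ) + s • ((v, 1) : Esp n × ℝ))
      ((v, 1) : Esp n × ℝ) 0 := by
    simpa using ((hasDerivAt_id (0 : ℝ)).smul_const ((v, 1) : Esp n × ℝ)).const_add (x, t)
  have hline' : HasDerivAt (fun s : ℝ => x + s • v) v 0 := by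
    simpa using ((hasDerivAt_id (0 : ℝ)).smul_const v).const_add x
  have hp : ∀ s : ℝ, ((x, t) : Esp n × ℝ) + s • ((v, 1) : Esp n × ℝ) = (x + s • v, t + s) := by
    intro s
    simp
  have hχ' : HasDerivAt (fun s : ℝ => χ (x + s • v)) (fderiv ℝ χ x v) 0 :=
    HasFDerivAt.comp_hasDerivAt (f := fun s : ℝ => x + s • v) 0
      (by simpa using hχ.hasFDerivAt) hline'
  have hψ' : HasDerivAt (fun s : ℝ => ψ (x + s • v)) (fderiv ℝ ψ x v) 0 :=
    HasFDerivAt.comp_hasDerivAt (f := fun s : ℝ => x + s • v) 0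
      (by simpa using hψ.hasFDerivAt) hline'
  have hz' : HasDerivAt (fun s : ℝ => z (x + s • v, t + s)) (fderiv ℝ z (x, t) (v, 1)) 0 := by
    have := HasFDerivAt.comp_hasDerivAt (l := z) (f := fun s : ℝ => (x, t) + s • (v, 1)) 0
      (by simpa using hz.hasFDerivAt) hline
    simpa only [Function.comp_def, hp] using this
  have hexp : HasDerivAt (fun s : ℝ => Real.exp (-lam * (t + s) + σ * ψ (x + s • v)))
      (Real.exp (-lam * t + σ * ψ x) * (-lam + σ * fderiv ℝ ψ x v)) 0 := by
    have h1 : HasDerivAt (fun s : ℝ => -lam * (t + s)) (-lam) 0 := by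
      simpa using ((hasDerivAt_id (0 : ℝ)).const_add t).const_mul (-lam)
    simpa using (h1.add (hψ'.const_mul σ)).exp
  have hprod := (hχ'.mul ((hz'.pow 2).mul hexp)).const_mul κ
  have hdiff : DifferentiableAt ℝ
      (fun q : Esp n × ℝ => κ * (χ q.1 * (z q ^ 2 * expWeight lam σ ψ q))) (x, t) := by
    have h1 : DifferentiableAt ℝ (fun q : Esp n × ℝ => χ q.1) (x, t) :=
      DifferentiableAt.comp (g := χ) (f := Prod.fst) (x, t) hχ differentiableAt_fst
    have h2 : DifferentiableAt ℝ (fun q : Esp n × ℝ => ψ q.1) (x, t) :=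
      DifferentiableAt.comp (g := ψ) (f := Prod.fst) (x, t) hψ differentiableAt_fst
    have h3 : DifferentiableAt ℝ (expWeight lam σ ψ) (x, t) := by
      unfold expWeight
      fun_prop
    exact (h1.mul ((hz.pow 2).mul h3)).const_mul κ
  have hcomp := HasFDerivAt.comp_hasDerivAt
    (l := fun q : Esp n × ℝ => κ * (χ q.1 * (z q ^ 2 * expWeight lam σ ψ q)))
    (f := fun s : ℝ => (x, t) + s • (v, 1)) 0 (by simpa using hdiff.hasFDerivAt) hline
  simp only [Function.comp_def, hp] at hcomp
  refine (hcomp.unique hprod).trans ?_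
  simp only [expWeight, Pi.mul_apply, Pi.pow_apply, zero_smul, add_zero]
  push_cast
  ring

/-- The data of a transport problem `∂ₜ z + ⟨H, ∇z⟩ + p₁ z = r f` on `graphDomain d ρ ℓ ℓt × (0, T)`,
with bounds `M` on `H`, `DH`, `p₁` and `R₁` on `r`. -/
structure IsTransport (d : ℕ) (D : Set (Esp (d+1))) (T M R₁ : ℝ) (H : Esp (d+1) → Esp (d+1))
    (p₁ f : Esp (d+1) → ℝ) (r : Esp (d+1) → ℝ → ℝ) (z : Esp (d+1) × ℝ → ℝ) : Prop where
  bound_nonneg : 0 ≤ M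
  contDiffOn_field : ContDiffOn ℝ 1 H D
  norm_field_le : ∀ x ∈ D, ‖H x‖ ≤ M
  norm_fderiv_field_le : ∀ x ∈ D, ‖fderiv ℝ H x‖ ≤ M
  abs_potential_le : ∀ x ∈ D, |p₁ x| ≤ M
  abs_source_le : ∀ x ∈ D, ∀ t ∈ Icc 0 T, |r x t| ≤ R₁
  source_bound_nonneg : 0 ≤ R₁
  continuousOn_amplitude : ContinuousOn f (closure D)
  contDiffOn : ContDiffOn ℝ 1 z (closure D ×ˢ Icc 0 T)
  equation : ∀ x ∈ D, ∀ t ∈ Ioo 0 T, fderiv ℝ z (x, t) (H x, 1) = r x t * f x - p₁ x * z (x, t)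

section Energy

variable {d : ℕ} {T M R₁ lam σ κ : ℝ} {D : Set (Esp (d+1))} {H : Esp (d+1) → Esp (d+1)}
  {p₁ f ψ : Esp (d+1) → ℝ} {r : Esp (d+1) → ℝ → ℝ} {z : Esp (d+1) × ℝ → ℝ}

lemma continuousOn_expWeight {K : Set (Esp (d+1))} {J : Set ℝ} (hψ : ContinuousOn ψ K) :
    ContinuousOn (expWeight lam σ ψ) (K ×ˢ J) := by
  have h : ContinuousOn (fun q : Esp (d+1) × ℝ => ψ q.1) (K ×ˢ J) :=
    hψ.comp continuousOn_fst fun q hq => hq.1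
  exact Real.continuous_exp.comp_continuousOn
    ((continuousOn_const.mul continuousOn_snd).add (continuousOn_const.mul h))

/-- Pointwise form of the energy inequality: the transported energy is bounded by the cutoff
gradient and the source. -/
lemma IsTransport.production_le (hZ : IsTransport d D T M R₁ H p₁ f r z) (hD : IsOpen D)
    {χ : Esp (d+1) → ℝ} (hχ : ContDiffOn ℝ 1 χ D) (hχ0 : ∀ x, 0 ≤ χ x) (hχ1 : ∀ x, χ x ≤ 1)
    (hψ : ContDiffOn ℝ 1 ψ D) (hκ : |κ| = 1) {x : Esp (d+1)} {t A : ℝ} (hx : x ∈ D)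
    (ht : t ∈ Ioo 0 T) (hκle : κ * (-lam + σ * fderiv ℝ ψ x (H x)) + ((d + 3) * M + R₁) ≤ 0)
    (hA : expWeight lam σ ψ (x, t) ≤ A) :
    fderiv ℝ (fun q : Esp (d+1) × ℝ => κ * (χ q.1 * (z q ^ 2 * expWeight lam σ ψ q))) (x, t) (H x, 1)
        + κ * (χ x * (z (x, t) ^ 2 * expWeight lam σ ψ (x, t))) * divergence H x
      ≤ A * (|fderiv ℝ χ x (H x)| * z (x, t) ^ 2) + R₁ * (f x ^ 2 * expWeight lam σ ψ (x, t)) := by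
  have hzd : DifferentiableAt ℝ z (x, t) := by
    refine ((hZ.contDiffOn.mono (prod_mono subset_closure subset_rfl)).contDiffAt
      (prod_mem_nhds (hD.mem_nhds hx) (Icc_mem_nhds ht.1 ht.2))).differentiableAt one_ne_zero
  rw [fderiv_cutoff_mul_sq_mul_expWeight ((hχ.contDiffAt (hD.mem_nhds hx)).differentiableAt one_ne_zero)
    ((hψ.contDiffAt (hD.mem_nhds hx)).differentiableAt one_ne_zero) hzd, hZ.equation x hx t ht]
  have hdiv := abs_divergence_le (hZ.norm_fderiv_field_le x hx)
  have hp := hZ.abs_potential_le x hx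
  have hr := hZ.abs_source_le x hx t ⟨ht.1.le, ht.2.le⟩
  have ha : 0 < expWeight lam σ ψ (x, t) := Real.exp_pos _
  set a := expWeight lam σ ψ (x, t)
  set Z := z (x, t)
  set g := fderiv ℝ χ x (H x)
  set Ψ := fderiv ℝ ψ x (H x)
  set V := divergence H x
  push_cast at hdiv
  have h1 : κ * (g * (Z ^ 2 * a)) ≤ A * (|g| * Z ^ 2) := by
    calc κ * (g * (Z ^ 2 * a)) ≤ |κ * (g * (Z ^ 2 * a))| := le_abs_self _
      _ = a * (|g| * Z ^ 2) := by
        rw [abs_mul, abs_mul, hκ, abs_of_nonneg (by positivity : 0 ≤ Z ^ 2 * a)]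
        ring
      _ ≤ A * (|g| * Z ^ 2) := by gcongr
  have h2 : κ * (2 * Z * (r x t * f x - p₁ x * Z) + Z ^ 2 * (-lam + σ * Ψ)) + κ * Z ^ 2 * V
      ≤ R₁ * f x ^ 2 := by
    have e1 : κ * V ≤ (d + 1) * M := by
      refine (le_abs_self _).trans ?_
      rw [abs_mul, hκ, one_mul]
      exact hdiv
    have e2 : -(κ * p₁ x) ≤ M := by
      refine (neg_le_abs _).trans ?_
      rw [abs_mul, hκ, one_mul]
      exact hp
    have e3 : κ * (2 * Z * (r x t * f x)) ≤ R₁ * (Z ^ 2 + f x ^ 2) := by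
      refine (le_abs_self _).trans ?_
      rw [abs_mul, hκ, one_mul]
      calc |2 * Z * (r x t * f x)| = |r x t| * (2 * |Z| * |f x|) := by
            simp only [abs_mul, abs_two]
            ring
        _ ≤ R₁ * (2 * |Z| * |f x|) := by gcongr
        _ ≤ R₁ * (Z ^ 2 + f x ^ 2) := by
            refine mul_le_mul_of_nonneg_left ?_ hZ.source_bound_nonneg
            rw [← sq_abs Z, ← sq_abs (f x)]
            nlinarith [sq_nonneg (|Z| - |f x|)]
    have e4 : Z ^ 2 * (κ * (-lam + σ * Ψ) + κ * V - 2 * (κ * p₁ x) + R₁) ≤ 0 :=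
      mul_nonpos_of_nonneg_of_nonpos (sq_nonneg Z) (by linarith)
    linarith
  have h3 : χ x * a * (κ * (2 * Z * (r x t * f x - p₁ x * Z) + Z ^ 2 * (-lam + σ * Ψ)) + κ * Z ^ 2 * V)
      ≤ R₁ * (f x ^ 2 * a) := by
    calc _ ≤ χ x * a * (R₁ * f x ^ 2) :=
          mul_le_mul_of_nonneg_left h2 (mul_nonneg (hχ0 x) ha.le)
      _ ≤ 1 * a * (R₁ * f x ^ 2) := by
          have := hZ.source_bound_nonneg
          gcongr
          exact hχ1 x
      _ = R₁ * (f x ^ 2 * a) := by ring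
  linarith

variable {ρ : ℝ} {ℓ ℓt : Esp d → ℝ}

/-- The weighted energy inequality. -/
lemma IsGraphPair.exists_weighted_energy_le (hG : IsGraphPair d ρ ℓ ℓt) :
    ∃ C > 0, ∀ (T M R₁ lam σ κ A : ℝ) (H : Esp (d+1) → Esp (d+1)) (p₁ f ψ : Esp (d+1) → ℝ)
      (r : Esp (d+1) → ℝ → ℝ) (z : Esp (d+1) × ℝ → ℝ),
      IsTransport d (graphDomain d ρ ℓ ℓt) T M R₁ H p₁ f r z → |κ| = 1 →
      ContDiffOn ℝ 1 ψ (graphDomain d ρ ℓ ℓt) → ContinuousOn ψ (closure (graphDomain d ρ ℓ ℓt)) →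
      (∀ x ∈ graphDomain d ρ ℓ ℓt,
        κ * (-lam + σ * fderiv ℝ ψ x (H x)) + ((d + 3) * M + R₁) ≤ 0) →
      0 ≤ A →
      (∀ x ∈ graphDomain d ρ ℓ ℓt, ∀ t ∈ Icc 0 T, expWeight lam σ ψ (x, t) ≤ A) →
      ∀ t ∈ Icc 0 T,
        κ * ((∫ x in graphDomain d ρ ℓ ℓt, z (x, t) ^ 2 * expWeight lam σ ψ (x, t))
          - ∫ x in graphDomain d ρ ℓ ℓt, z (x, 0) ^ 2 * expWeight lam σ ψ (x, 0))
        ≤ R₁ * (∫ s in (0)..t, ∫ x in graphDomain d ρ ℓ ℓt, f x ^ 2 * expWeight lam σ ψ (x, s))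
          + A * (C * M) * ∫ s in (0)..t, boundaryFlux d ρ ℓ ℓt fun x => z (x, s) ^ 2 := by
  obtain ⟨C, hC, hflux⟩ := hG.exists_cutoff_flux_le
  refine ⟨C, hC, fun T M R₁ lam σ κ A H p₁ f ψ r z hZ hκ hψ hψc hκle hA0 hA t ht => ?_⟩
  set D := graphDomain d ρ ℓ ℓt with hDdef
  have hDo : IsOpen D := hG.isOpen
  have hKc : IsCompact (closure D) := hG.isCompact_closure
  have hT : 0 ≤ T := ht.1.trans ht.2
  have h0T : (0 : ℝ) ∈ Icc 0 T := ⟨le_rfl, hT⟩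
  have hw : ContinuousOn (fun q => z q ^ 2) (closure D ×ˢ Icc 0 T) := hZ.contDiffOn.continuousOn.pow 2
  have hac : ContinuousOn (expWeight lam σ ψ) (closure D ×ˢ Icc 0 T) := continuousOn_expWeight hψc
  have hfc : ContinuousOn (fun q : Esp (d+1) × ℝ => f q.1 ^ 2 * expWeight lam σ ψ q)
      (closure D ×ˢ Icc 0 T) :=
    ((hZ.continuousOn_amplitude.comp continuousOn_fst fun q hq => hq.1).pow 2).mul hac
  have hslice : ∀ s ∈ Icc 0 T, ∀ g : Esp (d+1) × ℝ → ℝ, ContinuousOn g (closure D ×ˢ Icc 0 T) →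
      ContinuousOn (fun x => g (x, s)) (closure D) := fun s hs g hg =>
    hg.comp (by fun_prop) fun x hx => ⟨hx, hs⟩
  have hcS := continuousOn_setIntegral_time hDo hKc hfc
  have hcB := hG.continuousOn_boundaryFlux hw
  set S : ℝ → ℝ := fun s => ∫ x in D, f x ^ 2 * expWeight lam σ ψ (x, s)
  set b : ℝ → ℝ := fun s => boundaryFlux d ρ ℓ ℓt fun x => z (x, s) ^ 2
  set Ω : ℝ := boundaryFlux d ρ ℓ ℓt fun _ => 1
  have hbt : IntervalIntegrable b volume 0 t :=
    (hcB.mono (Icc_subset_Icc_right ht.2)).intervalIntegrable_of_Icc ht.1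
  have hSt : IntervalIntegrable S volume 0 t :=
    (hcS.mono (Icc_subset_Icc_right ht.2)).intervalIntegrable_of_Icc ht.1
  have hcut : ∀ η > 0, ∀ᶠ ε in 𝓝[>] (0 : ℝ),
      (∫ x in D, κ * (graphCutoff d ρ ℓ ℓt ε x * (z (x, t) ^ 2 * expWeight lam σ ψ (x, t))))
        - ∫ x in D, κ * (graphCutoff d ρ ℓ ℓt ε x * (z (x, 0) ^ 2 * expWeight lam σ ψ (x, 0)))
      ≤ R₁ * (∫ s in (0)..t, S s) + A * (C * M) * (∫ s in (0)..t, b s) + η * (A * (C * M) * (t * Ω)) := by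
    intro η hη
    filter_upwards [hflux T M _ H hw (fun q _ => sq_nonneg (z q)) hZ.norm_field_le hZ.bound_nonneg η hη,
      self_mem_nhdsWithin] with ε hε hε0
    have hχ := contDiffOn_graphCutoff (ε := ε) hG.contDiffOn_upper hG.contDiffOn_thickness
    have hχ0 : ∀ x ∉ graphCore d ρ ℓ ℓt ε, graphCutoff d ρ ℓ ℓt ε x = 0 := fun x hx =>
      graphCutoff_eq_zero hε0 hx
    have hχf : ContDiffOn ℝ 1 (fun q : Esp (d+1) × ℝ => graphCutoff d ρ ℓ ℓt ε q.1) (D ×ˢ Ioo 0 T) :=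
      hχ.comp contDiff_fst.contDiffOn fun q hq => hq.1
    have hψf : ContDiffOn ℝ 1 (fun q : Esp (d+1) × ℝ => ψ q.1) (D ×ˢ Ioo 0 T) :=
      hψ.comp contDiff_fst.contDiffOn fun q hq => hq.1
    have haf : ContDiffOn ℝ 1 (expWeight lam σ ψ) (D ×ˢ Ioo 0 T) :=
      ((contDiffOn_const.mul contDiff_snd.contDiffOn).add (contDiffOn_const.mul hψf)).exp
    have hmain := setIntegral_sub_le_of_transport_le
      (Φ := fun q : Esp (d+1) × ℝ => κ * (graphCutoff d ρ ℓ ℓt ε q.1 * (z q ^ 2 * expWeight lam σ ψ q)))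
      (φ := fun s => R₁ * S s + A * (C * M) * b s + η * (A * (C * M) * Ω)) hDo
      (isCompact_graphCore hε0 hG.contDiffOn_upper.continuousOn hG.contDiffOn_thickness.continuousOn
        hG.thickness_eq_zero) (graphCore_subset hε0 hG.thickness_eq_zero)
      (continuousOn_const.mul ((hχ.continuousOn.comp continuousOn_fst fun q hq => hq.1).mul
        ((hw.mul hac).mono (prod_mono subset_closure subset_rfl))))
      (contDiffOn_const.mul (hχf.mul (((hZ.contDiffOn.mono
        (prod_mono subset_closure Ioo_subset_Icc_self)).pow 2).mul haf)))
      (fun x hx s => by simp only [hχ0 x hx, zero_mul, mul_zero]) hZ.contDiffOn_field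
      (((((hcS.const_smul R₁).add (hcB.const_smul (A * (C * M)))).add continuousOn_const)).integrableOn_Icc)
      (fun s hs => ?_) ht
    · refine hmain.trans_eq ?_
      rw [intervalIntegral.integral_add ((hSt.const_mul _).add (hbt.const_mul _)) (by simp),
        intervalIntegral.integral_add (hSt.const_mul _) (hbt.const_mul _),
        intervalIntegral.integral_const_mul, intervalIntegral.integral_const_mul,
        intervalIntegral.integral_const, smul_eq_mul]
      ring
    · have hsI : s ∈ Icc 0 T := ⟨hs.1.le, hs.2.le⟩
      obtain ⟨F, hFI, hF, hFle⟩ := hε s hsI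
      have hfI : IntegrableOn (fun x => f x ^ 2 * expWeight lam σ ψ (x, s)) D :=
        hG.integrableOn_of_continuousOn (hslice s hsI _ hfc)
      have hR1 := hZ.source_bound_nonneg
      have hub : ∫ x in D, (A * F x + R₁ * (f x ^ 2 * expWeight lam σ ψ (x, s)))
          ≤ R₁ * S s + A * (C * M) * b s + η * (A * (C * M) * Ω) := by
        rw [integral_add (hFI.const_mul A) (hfI.const_mul R₁), integral_const_mul, integral_const_mul]
        have := mul_le_mul_of_nonneg_left hFle hA0
        linarith
      have hpt : ∀ x ∈ D, |fderiv ℝ (graphCutoff d ρ ℓ ℓt ε) x (H x)| * z (x, s) ^ 2 ≤ F x := hF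
      by_cases hI : IntegrableOn (fun x => fderiv ℝ (fun q : Esp (d+1) × ℝ =>
          κ * (graphCutoff d ρ ℓ ℓt ε q.1 * (z q ^ 2 * expWeight lam σ ψ q))) (x, s) (H x, 1)
          + κ * (graphCutoff d ρ ℓ ℓt ε x * (z (x, s) ^ 2 * expWeight lam σ ψ (x, s)))
            * divergence H x) D
      · refine (setIntegral_mono_on hI ((hFI.const_mul A).add (hfI.const_mul R₁)) hDo.measurableSet
          fun x hx => ?_).trans hub
        refine (hZ.production_le hDo hχ graphCutoff_nonneg graphCutoff_le_one hψ hκ hx hs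
          (hκle x hx) (hA x hx s hsI)).trans ?_
        exact add_le_add (mul_le_mul_of_nonneg_left (hpt x hx) hA0) le_rfl
      · rw [integral_undef hI]
        refine le_trans (setIntegral_nonneg hDo.measurableSet fun x hx => ?_) hub
        have hF0 : 0 ≤ F x := le_trans (by positivity) (hpt x hx)
        have ha : 0 < expWeight lam σ ψ (x, s) := Real.exp_pos _
        positivity
  have hlim : ∀ s ∈ Icc 0 T, Tendsto (fun ε => ∫ x in D,
      κ * (graphCutoff d ρ ℓ ℓt ε x * (z (x, s) ^ 2 * expWeight lam σ ψ (x, s)))) (𝓝[>] (0 : ℝ))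
      (𝓝 (κ * ∫ x in D, z (x, s) ^ 2 * expWeight lam σ ψ (x, s))) := by
    intro s hs
    have hI : IntegrableOn (fun x => z (x, s) ^ 2 * expWeight lam σ ψ (x, s)) D :=
      hG.integrableOn_of_continuousOn (hslice s hs _ (hw.mul hac))
    rw [← integral_const_mul]
    refine tendsto_integral_filter_of_dominated_convergence
      (fun x => z (x, s) ^ 2 * expWeight lam σ ψ (x, s)) ?_ ?_ hI ?_
    · refine Eventually.of_forall fun ε => ?_
      have hχ := contDiffOn_graphCutoff (ε := ε) hG.contDiffOn_upper hG.contDiffOn_thickness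
      exact ((hχ.continuousOn.aestronglyMeasurable hDo.measurableSet).mul
        hI.aestronglyMeasurable).const_mul κ
    · refine Eventually.of_forall fun ε => Eventually.of_forall fun x => ?_
      have ha : 0 < expWeight lam σ ψ (x, s) := Real.exp_pos _
      rw [norm_mul, Real.norm_eq_abs, hκ, one_mul, norm_mul,
        Real.norm_of_nonneg (graphCutoff_nonneg x), Real.norm_of_nonneg (by positivity)]
      exact mul_le_of_le_one_left (by positivity) (graphCutoff_le_one x)
    · filter_upwards [ae_restrict_mem hDo.measurableSet] with x hx
      simpa using ((tendsto_graphCutoff hx).mul_const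
        (z (x, s) ^ 2 * expWeight lam σ ψ (x, s))).const_mul κ
  have hη : ∀ η > 0, κ * ((∫ x in D, z (x, t) ^ 2 * expWeight lam σ ψ (x, t))
      - ∫ x in D, z (x, 0) ^ 2 * expWeight lam σ ψ (x, 0))
      ≤ R₁ * (∫ s in (0)..t, S s) + A * (C * M) * (∫ s in (0)..t, b s)
        + η * (A * (C * M) * (t * Ω)) := fun η hη => by
    rw [mul_sub]
    exact le_of_tendsto ((hlim t ht).sub (hlim 0 h0T)) (hcut η hη)
  have hlast : Tendsto (fun η : ℝ => R₁ * (∫ s in (0)..t, S s) + A * (C * M) * (∫ s in (0)..t, b s)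
      + η * (A * (C * M) * (t * Ω))) (𝓝[>] 0)
      (𝓝 (R₁ * (∫ s in (0)..t, S s) + A * (C * M) * (∫ s in (0)..t, b s)
        + 0 * (A * (C * M) * (t * Ω)))) :=
    tendsto_const_nhds.add ((tendsto_nhdsWithin_of_tendsto_nhds tendsto_id).mul_const _)
  rw [zero_mul, add_zero] at hlast
  exact ge_of_tendsto hlast (by filter_upwards [self_mem_nhdsWithin] with η h using hη η h)

end Energy

/-! ### Stability estimates -/

lemma integral_exp_neg_mul_le {lam T : ℝ} (hlam : 0 < lam) :
    ∫ s in (0)..T, Real.exp (-lam * s) ≤ 1 / lam := by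
  have h : ∀ s ∈ uIcc 0 T,
      HasDerivAt (fun s => -Real.exp (-lam * s) / lam) (Real.exp (-lam * s)) s := by
    intro s _
    have h1 : HasDerivAt (fun s : ℝ => -lam * s) (-lam) s := by
      simpa using (hasDerivAt_id s).const_mul (-lam)
    have h2 : HasDerivAt (fun s => -Real.exp (-lam * s) / lam)
        (-(Real.exp (-lam * s) * -lam) / lam) s := h1.exp.neg.div_const lam
    rwa [mul_neg, neg_neg, mul_div_cancel_right₀ _ hlam.ne'] at h2
  rw [intervalIntegral.integral_eq_sub_of_hasDerivAt h
    ((by fun_prop : Continuous fun s => Real.exp (-lam * s)).intervalIntegrable _ _)]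
  have : -Real.exp (-lam * T) / lam ≤ 0 :=
    div_nonpos_of_nonpos_of_nonneg (neg_nonpos.2 (Real.exp_pos _).le) hlam.le
  have e : -Real.exp (-lam * 0) / lam = -(1 / lam) := by
    simp
    ring
  linarith

section Stability

variable {d : ℕ} {ρ T M R₁ R₀ : ℝ} {ℓ ℓt : Esp d → ℝ}

lemma IsTransport.continuousOn_sq {H : Esp (d+1) → Esp (d+1)} {p₁ f : Esp (d+1) → ℝ}
    {r : Esp (d+1) → ℝ → ℝ} {z : Esp (d+1) × ℝ → ℝ}
    (hZ : IsTransport d (graphDomain d ρ ℓ ℓt) T M R₁ H p₁ f r z) {t : ℝ} (ht : t ∈ Icc 0 T) :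
    ContinuousOn (fun x => z (x, t) ^ 2) (closure (graphDomain d ρ ℓ ℓt)) :=
  (hZ.contDiffOn.continuousOn.comp (f := fun x => (x, t)) (by fun_prop) fun x hx => ⟨hx, ht⟩).pow 2

lemma IsTransport.intervalIntegral_boundaryFlux_mono {H : Esp (d+1) → Esp (d+1)}
    {p₁ f : Esp (d+1) → ℝ} {r : Esp (d+1) → ℝ → ℝ} {z : Esp (d+1) × ℝ → ℝ}
    (hG : IsGraphPair d ρ ℓ ℓt) (hZ : IsTransport d (graphDomain d ρ ℓ ℓt) T M R₁ H p₁ f r z)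
    {t : ℝ} (ht : t ∈ Icc 0 T) :
    ∫ s in (0)..t, boundaryFlux d ρ ℓ ℓt (fun x => z (x, s) ^ 2)
      ≤ ∫ s in (0)..T, boundaryFlux d ρ ℓ ℓt fun x => z (x, s) ^ 2 := by
  have hc := hG.continuousOn_boundaryFlux (hZ.contDiffOn.continuousOn.pow 2)
  exact intervalIntegral.integral_mono_interval le_rfl ht.1 ht.2
    (Eventually.of_forall fun s => hG.boundaryFlux_nonneg fun x _ => sq_nonneg _)
    (hc.intervalIntegrable_of_Icc (ht.1.trans ht.2))

/-- The energy at every time is controlled by the amplitude and the boundary data. -/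
lemma IsGraphPair.exists_forward_energy_le (hG : IsGraphPair d ρ ℓ ℓt) (hT : 0 < T) (hM : 0 ≤ M)
    (hR₁ : 0 ≤ R₁) :
    ∃ C > 0, ∀ (H : Esp (d+1) → Esp (d+1)) (p₁ f : Esp (d+1) → ℝ)
      (r : Esp (d+1) → ℝ → ℝ) (z : Esp (d+1) × ℝ → ℝ),
      IsTransport d (graphDomain d ρ ℓ ℓt) T M R₁ H p₁ f r z →
      (∀ x ∈ graphDomain d ρ ℓ ℓt, z (x, 0) ^ 2 ≤ R₀ ^ 2 * f x ^ 2) → ∀ t ∈ Icc 0 T,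
      ∫ x in graphDomain d ρ ℓ ℓt, z (x, t) ^ 2 ≤ C * ((∫ x in graphDomain d ρ ℓ ℓt, f x ^ 2)
        + ∫ s in (0)..T, boundaryFlux d ρ ℓ ℓt fun x => z (x, s) ^ 2) := by
  obtain ⟨C, hC, hE⟩ := hG.exists_weighted_energy_le
  set lam : ℝ := (d + 3) * M + R₁ with hlam
  have hlam0 : 0 ≤ lam := by positivity
  refine ⟨Real.exp (lam * T) * (R₀ ^ 2 + R₁ * T + C * M + 1), by positivity,
    fun H p₁ f r z hZ hz0 t ht => ?_⟩
  set D := graphDomain d ρ ℓ ℓt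
  have h0T : (0 : ℝ) ∈ Icc 0 T := ⟨le_rfl, hT.le⟩
  have hw : ∀ q : Esp (d+1) × ℝ, expWeight lam 0 (fun _ => 0) q = Real.exp (-lam * q.2) := by
    intro q
    simp [expWeight]
  have hfI : IntegrableOn (fun x => f x ^ 2) D :=
    hG.integrableOn_of_continuousOn (hZ.continuousOn_amplitude.pow 2)
  have hmain := hE T M R₁ lam 0 1 1 H p₁ f (fun _ => 0) r z hZ (by simp) contDiffOn_const
    continuousOn_const (fun x _ => by rw [hlam]; linarith) zero_le_one
    (fun x _ s hs => by
      rw [hw, Real.exp_le_one_iff]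
      nlinarith [mul_nonneg hlam0 hs.1]) t ht
  simp only [hw, one_mul, integral_mul_const, mul_zero, Real.exp_zero, mul_one] at hmain
  have hF0 : 0 ≤ ∫ x in D, f x ^ 2 := integral_nonneg fun x => sq_nonneg _
  have hB := hZ.intervalIntegral_boundaryFlux_mono hG ht
  have hB0 : 0 ≤ ∫ s in (0)..T, boundaryFlux d ρ ℓ ℓt fun x => z (x, s) ^ 2 :=
    intervalIntegral.integral_nonneg hT.le fun s _ => hG.boundaryFlux_nonneg fun x _ => sq_nonneg _
  have h1 : ∫ x in D, z (x, 0) ^ 2 ≤ R₀ ^ 2 * ∫ x in D, f x ^ 2 := by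
    rw [← integral_const_mul]
    exact setIntegral_mono_on (hG.integrableOn_of_continuousOn (hZ.continuousOn_sq h0T))
      (hfI.const_mul _) hG.isOpen.measurableSet hz0
  have h2 : ∫ s in (0)..t, (∫ x in D, f x ^ 2) * Real.exp (-lam * s) ≤ T * ∫ x in D, f x ^ 2 := by
    calc _ ≤ ∫ _s in (0)..t, ∫ x in D, f x ^ 2 := by
          refine intervalIntegral.integral_mono_on ht.1 (Continuous.intervalIntegrable (by fun_prop) _ _)
            (by simp) fun s hs => mul_le_of_le_one_right hF0 ?_
          rw [Real.exp_le_one_iff]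
          nlinarith [mul_nonneg hlam0 hs.1]
      _ = t * ∫ x in D, f x ^ 2 := by simp
      _ ≤ T * ∫ x in D, f x ^ 2 := mul_le_mul_of_nonneg_right ht.2 hF0
  set F := ∫ x in D, f x ^ 2
  set B := ∫ s in (0)..T, boundaryFlux d ρ ℓ ℓt fun x => z (x, s) ^ 2
  set E := ∫ x in D, z (x, t) ^ 2
  have hE0 : 0 ≤ E := integral_nonneg fun x => sq_nonneg _
  have h3 : E * Real.exp (-lam * t) ≤ (R₀ ^ 2 + R₁ * T + C * M + 1) * (F + B) := by
    have e1 := mul_le_mul_of_nonneg_left h2 hR₁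
    have e2 := mul_le_mul_of_nonneg_left hB (mul_nonneg hC.le hM)
    have e3 : 0 ≤ (R₀ ^ 2 + R₁ * T + 1) * B + (C * M + 1) * F := by positivity
    linarith
  calc E = Real.exp (lam * t) * (E * Real.exp (-lam * t)) := by
        rw [mul_comm E, ← mul_assoc, ← Real.exp_add]
        simp
    _ ≤ Real.exp (lam * T) * ((R₀ ^ 2 + R₁ * T + C * M + 1) * (F + B)) := by
        refine mul_le_mul (Real.exp_le_exp.2 (mul_le_mul_of_nonneg_left ht.2 hlam0)) h3
          (by positivity) (Real.exp_pos _).le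
    _ = _ := by ring

/-- The amplitude is controlled by the boundary data alone. -/
lemma IsGraphPair.exists_amplitude_le (hG : IsGraphPair d ρ ℓ ℓt) (hT : 0 < T) (hM : 0 ≤ M)
    (hR₁ : 0 ≤ R₁) {r₀ β P : ℝ} (hr₀ : 0 < r₀) (hβ : 0 < β) (hPβ : 2 * P < β * T) :
    ∃ C > 0, ∀ (H : Esp (d+1) → Esp (d+1)) (p₁ f ψ : Esp (d+1) → ℝ)
      (r : Esp (d+1) → ℝ → ℝ) (z : Esp (d+1) × ℝ → ℝ),
      IsTransport d (graphDomain d ρ ℓ ℓt) T M R₁ H p₁ f r z →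
      ContDiffOn ℝ 1 ψ (graphDomain d ρ ℓ ℓt) → ContinuousOn ψ (closure (graphDomain d ρ ℓ ℓt)) →
      (∀ x ∈ graphDomain d ρ ℓ ℓt, 2 * β ≤ fderiv ℝ ψ x (H x)) →
      (∀ x ∈ graphDomain d ρ ℓ ℓt, |ψ x| ≤ P) →
      (∀ x ∈ graphDomain d ρ ℓ ℓt, z (x, 0) ^ 2 ≤ R₀ ^ 2 * f x ^ 2) →
      (∀ x ∈ graphDomain d ρ ℓ ℓt, r₀ ^ 2 * f x ^ 2 ≤ z (x, 0) ^ 2) →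
      ∫ x in graphDomain d ρ ℓ ℓt, f x ^ 2
        ≤ C * ∫ s in (0)..T, boundaryFlux d ρ ℓ ℓt fun x => z (x, s) ^ 2 := by
  obtain ⟨C, hC, hE⟩ := hG.exists_weighted_energy_le
  obtain ⟨C₁, hC₁, hE₁⟩ := hG.exists_forward_energy_le (R₀ := R₀) hT hM hR₁
  obtain ⟨s, hs0, hs1, hs2, hs3⟩ : ∃ s : ℝ, 0 < s ∧ (d + 3) * M + R₁ ≤ 2 * s * β ∧
      R₁ * (1 / (2 * s * β)) ≤ r₀ ^ 2 / 2 ∧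
      Real.exp (-(2 * s * (β * T - 2 * P))) * C₁ ≤ r₀ ^ 2 / 4 := by
    have hlin : ∀ c > 0, Tendsto (fun s : ℝ => 2 * s * c) atTop atTop := fun c hc =>
      (tendsto_id.const_mul_atTop two_pos).atTop_mul_const hc
    have t1 := hlin β hβ
    have t2 : Tendsto (fun s : ℝ => R₁ * (1 / (2 * s * β))) atTop (𝓝 0) := by
      simpa using (t1.inv_tendsto_atTop).const_mul R₁
    have t3 : Tendsto (fun s : ℝ => Real.exp (-(2 * s * (β * T - 2 * P))) * C₁) atTop (𝓝 0) := by
      simpa using ((Real.tendsto_exp_neg_atTop_nhds_zero).comp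
        (hlin (β * T - 2 * P) (by linarith))).mul_const C₁
    have hr2 : 0 < r₀ ^ 2 / 2 := by positivity
    have hr4 : 0 < r₀ ^ 2 / 4 := by positivity
    exact (((eventually_gt_atTop 0).and ((t1.eventually_ge_atTop _).and
      ((t2.eventually_le_const hr2).and (t3.eventually_le_const hr4))))).exists
  set lam := 2 * s * β with hlamdef
  have hlam : 0 < lam := by positivity
  set q := r₀ ^ 2 / 4 with hqdef
  have hq : 0 < q := by positivity
  set A := Real.exp (2 * s * P) with hAdef
  have hA : 0 < A := Real.exp_pos _
  refine ⟨(q + A * (A * (C * M))) / q, by positivity, fun H p₁ f ψ r z hZ hψ hψc hψH hψP hzR hzr => ?_⟩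
  set D := graphDomain d ρ ℓ ℓt
  have h0T : (0 : ℝ) ∈ Icc 0 T := ⟨le_rfl, hT.le⟩
  have hTT : T ∈ Icc 0 T := ⟨hT.le, le_rfl⟩
  have hDm : MeasurableSet D := hG.isOpen.measurableSet
  have hw : ∀ (x : Esp (d+1)) (t : ℝ), expWeight lam (2 * s) ψ (x, t)
      = Real.exp (2 * s * ψ x) * Real.exp (-lam * t) := by
    intro x t
    rw [expWeight, ← Real.exp_add, add_comm]
  have hup : ∀ x ∈ D, Real.exp (2 * s * ψ x) ≤ A := fun x hx =>
    Real.exp_le_exp.2 (mul_le_mul_of_nonneg_left (abs_le.1 (hψP x hx)).2 (by positivity))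
  have hlow : ∀ x ∈ D, 1 ≤ A * Real.exp (2 * s * ψ x) := fun x hx => by
    rw [hAdef, ← Real.exp_add, Real.one_le_exp_iff, ← mul_add]
    exact mul_nonneg (by positivity) (by linarith [(abs_le.1 (hψP x hx)).1])
  have hec : ContinuousOn (fun x => Real.exp (2 * s * ψ x)) (closure D) :=
    Real.continuous_exp.comp_continuousOn (continuousOn_const.mul hψc)
  have hfc := hZ.continuousOn_amplitude.pow 2
  have hmain := hE T M R₁ lam (2 * s) (-1) A H p₁ f ψ r z hZ (by simp) hψ hψc
    (fun x hx => by nlinarith [mul_le_mul_of_nonneg_left (hψH x hx) hs0.le]) hA.le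
    (fun x hx t ht => by
      rw [hw]
      refine (mul_le_of_le_one_right (Real.exp_pos _).le ?_).trans (hup x hx)
      rw [Real.exp_le_one_iff]
      nlinarith [mul_nonneg hlam.le ht.1]) T hTT
  simp only [hw, ← mul_assoc, integral_mul_const, mul_zero, Real.exp_zero, mul_one,
    intervalIntegral.integral_const_mul] at hmain
  have hfor := hE₁ H p₁ f r z hZ hzR T hTT
  set B := ∫ s in (0)..T, boundaryFlux d ρ ℓ ℓt fun x => z (x, s) ^ 2
  have hB0 : 0 ≤ B :=
    intervalIntegral.integral_nonneg hT.le fun s _ => hG.boundaryFlux_nonneg fun x _ => sq_nonneg _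
  have hGI : IntegrableOn (fun x => f x ^ 2 * Real.exp (2 * s * ψ x)) D :=
    hG.integrableOn_of_continuousOn (hfc.mul hec)
  have hFI : IntegrableOn (fun x => f x ^ 2) D := hG.integrableOn_of_continuousOn hfc
  have hzI : ∀ t ∈ Icc 0 T, IntegrableOn (fun x => z (x, t) ^ 2 * Real.exp (2 * s * ψ x)) D :=
    fun t ht => hG.integrableOn_of_continuousOn ((hZ.continuousOn_sq ht).mul hec)
  have g1 : r₀ ^ 2 * (∫ x in D, f x ^ 2 * Real.exp (2 * s * ψ x))
      ≤ ∫ x in D, z (x, 0) ^ 2 * Real.exp (2 * s * ψ x) := by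
    rw [← integral_const_mul]
    refine setIntegral_mono_on (hGI.const_mul _) (hzI 0 h0T) hDm fun x hx => ?_
    rw [← mul_assoc]
    exact mul_le_mul_of_nonneg_right (hzr x hx) (Real.exp_pos _).le
  have g2 : ∫ x in D, f x ^ 2 ≤ A * ∫ x in D, f x ^ 2 * Real.exp (2 * s * ψ x) := by
    rw [← integral_const_mul]
    refine setIntegral_mono_on hFI (hGI.const_mul _) hDm fun x hx => ?_
    nlinarith [mul_le_mul_of_nonneg_left (hlow x hx) (sq_nonneg (f x))]
  have g3 : ∫ x in D, z (x, T) ^ 2 * Real.exp (2 * s * ψ x) ≤ A * ∫ x in D, z (x, T) ^ 2 := by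
    rw [← integral_const_mul]
    refine setIntegral_mono_on (hzI T hTT)
      ((hG.integrableOn_of_continuousOn (hZ.continuousOn_sq hTT)).const_mul _) hDm fun x hx => ?_
    rw [mul_comm]
    exact mul_le_mul_of_nonneg_right (hup x hx) (sq_nonneg _)
  have hG0 : 0 ≤ ∫ x in D, f x ^ 2 * Real.exp (2 * s * ψ x) :=
    integral_nonneg fun x => mul_nonneg (sq_nonneg _) (Real.exp_pos _).le
  have hF0 : 0 ≤ ∫ x in D, f x ^ 2 := integral_nonneg fun x => sq_nonneg _
  have g4 := integral_exp_neg_mul_le (T := T) hlam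
  have hAA : A * A * Real.exp (-lam * T) = Real.exp (-(2 * s * (β * T - 2 * P))) := by
    rw [hAdef, ← Real.exp_add, ← Real.exp_add, hlamdef]
    ring_nf
  set W := ∫ x in D, f x ^ 2 * Real.exp (2 * s * ψ x)
  set F := ∫ x in D, f x ^ 2
  set E := ∫ x in D, z (x, T) ^ 2
  set e := Real.exp (-lam * T)
  have he : 0 < e := Real.exp_pos _
  have k1 : R₁ * W * (∫ s in (0)..T, Real.exp (-lam * s)) ≤ r₀ ^ 2 / 2 * W := by
    calc _ ≤ R₁ * W * (1 / lam) := mul_le_mul_of_nonneg_left g4 (mul_nonneg hR₁ hG0)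
      _ = R₁ * (1 / lam) * W := by ring
      _ ≤ _ := mul_le_mul_of_nonneg_right hs2 hG0
  have k2 : r₀ ^ 2 / 2 * W ≤ A * E * e + A * (C * M) * B := by
    have := mul_le_mul_of_nonneg_right g3 he.le
    linarith
  have k3 : r₀ ^ 2 / 2 * F ≤ q * (F + B) + A * (A * (C * M)) * B := by
    calc r₀ ^ 2 / 2 * F ≤ A * (r₀ ^ 2 / 2 * W) := by
          nlinarith [mul_le_mul_of_nonneg_left g2 (by positivity : 0 ≤ r₀ ^ 2 / 2)]
      _ ≤ A * (A * E * e + A * (C * M) * B) := mul_le_mul_of_nonneg_left k2 hA.le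
      _ = (A * A * e) * E + A * (A * (C * M)) * B := by ring
      _ ≤ (A * A * e) * (C₁ * (F + B)) + A * (A * (C * M)) * B := by
          have := mul_le_mul_of_nonneg_left hfor (by positivity : 0 ≤ A * A * e)
          linarith
      _ ≤ q * (F + B) + A * (A * (C * M)) * B := by
          rw [hAA, ← mul_assoc]
          have := mul_le_mul_of_nonneg_right hs3 (add_nonneg hF0 hB0)
          linarith
  rw [div_mul_eq_mul_div, le_div_iff₀ hq]
  have hq2 : r₀ ^ 2 / 2 = 2 * q := by rw [hqdef]; ring
  rw [hq2] at k3
  linarith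

end Stability

/-! ### The weight function and the displacement -/

lemma norm_le_diam_of_zero_mem {n : ℕ} {D : Set (Esp n)} (hD : IsCompact (closure D))
    (h0 : (0 : Esp n) ∈ closure D) {x : Esp n} (hx : x ∈ closure D) : ‖x‖ ≤ diam D := by
  have h := dist_le_diam_of_mem hD.isBounded hx h0
  rwa [dist_zero_right, diam_closure] at h

lemma abs_psiW_le {n : ℕ} {H : Esp n → Esp n} {x : Esp n} {M P : ℝ} (hH : ‖H x‖ ≤ M)
    (hx : ‖x‖ ≤ P) : |psiW H x| ≤ P * M :=
  (abs_real_inner_le_norm x (H x)).trans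
    (mul_le_mul hx hH (norm_nonneg _) ((norm_nonneg _).trans hx))

lemma contDiffOn_psiW {n : ℕ} {H : Esp n → Esp n} {U : Set (Esp n)} (hH : ContDiffOn ℝ 1 H U) :
    ContDiffOn ℝ 1 (psiW H) U :=
  contDiffOn_id.inner ℝ hH

lemma le_fderiv_psiW {n : ℕ} {H : Esp n → Esp n} {x : Esp n} {M P : ℝ}
    (hd : DifferentiableAt ℝ H x) (hH : ‖H x‖ ≤ M) (hH' : ‖fderiv ℝ H x‖ ≤ M) (hx : ‖x‖ ≤ P) :
    ‖H x‖ ^ 2 - P * M ^ 2 ≤ fderiv ℝ (psiW H) x (H x) := by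
  have e : fderiv ℝ (psiW H) x (H x) = ⟪x, fderiv ℝ H x (H x)⟫ + ⟪H x, H x⟫ := by
    exact (fderiv_inner_apply ℝ differentiableAt_id hd (H x)).trans (by simp)
  have hM : 0 ≤ M := (norm_nonneg _).trans hH
  have h : |⟪x, fderiv ℝ H x (H x)⟫| ≤ P * M ^ 2 :=
    calc |⟪x, fderiv ℝ H x (H x)⟫| ≤ ‖x‖ * ‖fderiv ℝ H x (H x)‖ := abs_real_inner_le_norm _ _
      _ ≤ P * (M * M) := by
          refine mul_le_mul hx ?_ (norm_nonneg _) ((norm_nonneg _).trans hx)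
          exact (ContinuousLinearMap.le_opNorm _ _).trans
            (mul_le_mul hH' hH (norm_nonneg _) hM)
      _ = P * M ^ 2 := by ring
  rw [e, real_inner_self_eq_norm_sq]
  linarith [(abs_le.1 h).1]

lemma sq_le_exp_mul_integral_sq {T : ℝ} {y z : ℝ → ℝ}
    (hy : ∀ t ∈ Icc 0 T, HasDerivWithinAt y (z t) (Icc 0 T) t) (hz : ContinuousOn z (Icc 0 T))
    (hy0 : y 0 = 0) {t : ℝ} (ht : t ∈ Icc 0 T) :
    y t ^ 2 ≤ Real.exp T * ∫ s in (0)..T, z s ^ 2 := by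
  have hsub : Icc 0 t ⊆ Icc 0 T := Icc_subset_Icc_right ht.2
  have hder : ∀ s ∈ Icc 0 T, HasDerivWithinAt (fun s => y s ^ 2 * Real.exp (-s))
      (2 * y s * z s * Real.exp (-s) - y s ^ 2 * Real.exp (-s)) (Icc 0 T) s := by
    intro s hs
    have h1 : HasDerivWithinAt (fun s : ℝ => Real.exp (-s)) (-Real.exp (-s)) (Icc 0 T) s := by
      simpa using ((hasDerivAt_id s).neg.exp).hasDerivWithinAt
    have h2 : HasDerivWithinAt (fun s : ℝ => y s ^ 2) (2 * y s * z s) (Icc 0 T) s := by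
      have h := (hy s hs).fun_pow 2
      simpa using h
    have h3 : HasDerivWithinAt (fun s => y s ^ 2 * Real.exp (-s))
      (2 * y s * z s * Real.exp (-s) + y s ^ 2 * -Real.exp (-s)) (Icc 0 T) s := h2.mul h1
    convert h3 using 1
    ring
  have hzI : IntegrableOn (fun s => z s ^ 2) (Icc 0 T) := (hz.pow 2).integrableOn_Icc
  have key := intervalIntegral.sub_le_integral_of_hasDeriv_right_of_le ht.1
    (fun s hs => (hder s (hsub hs)).continuousWithinAt.mono hsub)
    (fun s hs => (hder s (hsub ⟨hs.1.le, hs.2.le⟩)).mono_of_mem_nhdsWithin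
      (mem_nhdsWithin_of_mem_nhds (Icc_mem_nhds hs.1 (hs.2.trans_le ht.2))))
    (hzI.mono_set hsub)
    (fun s hs => by
      have h1 : Real.exp (-s) ≤ 1 := Real.exp_le_one_iff.2 (neg_nonpos.2 hs.1.le)
      have h2 : 2 * y s * z s - y s ^ 2 ≤ z s ^ 2 := by nlinarith [sq_nonneg (y s - z s)]
      calc 2 * y s * z s * Real.exp (-s) - y s ^ 2 * Real.exp (-s)
          = (2 * y s * z s - y s ^ 2) * Real.exp (-s) := by ring
        _ ≤ z s ^ 2 * Real.exp (-s) := mul_le_mul_of_nonneg_right h2 (Real.exp_pos _).le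
        _ ≤ z s ^ 2 := mul_le_of_le_one_right (sq_nonneg _) h1)
  have hmono : ∫ s in (0)..t, z s ^ 2 ≤ ∫ s in (0)..T, z s ^ 2 :=
    intervalIntegral.integral_mono_interval le_rfl ht.1 ht.2
      (Eventually.of_forall fun s => sq_nonneg _)
      ((hz.pow 2).intervalIntegrable_of_Icc (ht.1.trans ht.2))
  have h0 : 0 ≤ ∫ s in (0)..T, z s ^ 2 :=
    intervalIntegral.integral_nonneg (ht.1.trans ht.2) fun s _ => sq_nonneg _
  have hle : y t ^ 2 * Real.exp (-t) ≤ ∫ s in (0)..T, z s ^ 2 := by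
    simp only [hy0] at key
    linarith
  calc y t ^ 2 = Real.exp t * (y t ^ 2 * Real.exp (-t)) := by
        rw [mul_left_comm, ← Real.exp_add, add_neg_cancel, Real.exp_zero, mul_one]
    _ ≤ Real.exp T * ∫ s in (0)..T, z s ^ 2 :=
        mul_le_mul (Real.exp_le_exp.2 ht.2) hle
          (mul_nonneg (sq_nonneg _) (Real.exp_pos _).le) (Real.exp_pos _).le

lemma setIntegral_sq_le_of_timeDeriv {n : ℕ} {T : ℝ} {D : Set (Esp n)} {y : Esp n → ℝ → ℝ}
    (hT : 0 < T) (hD : IsOpen D) (hK : IsCompact (closure D))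
    (hy : ContDiffOn ℝ 2 (fun q : Esp n × ℝ => y q.1 q.2) (closure D ×ˢ Icc 0 T))
    (hy0 : ∀ x ∈ D, y x 0 = 0) {S : ℝ}
    (hS : ∀ s ∈ Icc 0 T, ∫ x in D, timeDeriv T y x s ^ 2 ≤ S) {t : ℝ} (ht : t ∈ Icc 0 T) :
    ∫ x in D, y x t ^ 2 ≤ Real.exp T * (T * S) := by
  have hz : ContinuousOn (fun q : Esp n × ℝ => timeDeriv T y q.1 q.2 ^ 2)
      (closure D ×ˢ Icc 0 T) := (contDiffOn_timeDeriv hT hy).continuousOn.pow 2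
  have hprod : Integrable (Function.uncurry fun (x : Esp n) (s : ℝ) => timeDeriv T y x s ^ 2)
      ((volume.restrict D).prod (volume.restrict (Ioc 0 T))) := by
    rw [Measure.prod_restrict]
    exact (hz.integrableOn_compact (hK.prod isCompact_Icc)).mono_set
      (prod_mono subset_closure Ioc_subset_Icc_self)
  have hyI : IntegrableOn (fun x => y x t ^ 2) D := by
    refine IntegrableOn.mono_set (ContinuousOn.integrableOn_compact hK ?_) subset_closure
    exact (hy.continuousOn.comp (f := fun x => (x, t)) (by fun_prop) fun x hx => ⟨hx, ht⟩).pow 2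
  have hleft : IntegrableOn (fun x => Real.exp T * ∫ s in (0)..T, timeDeriv T y x s ^ 2) D := by
    simp only [intervalIntegral.integral_of_le hT.le]
    exact hprod.integral_prod_left.const_mul _
  calc ∫ x in D, y x t ^ 2 ≤ ∫ x in D, Real.exp T * ∫ s in (0)..T, timeDeriv T y x s ^ 2 := by
        refine setIntegral_mono_on hyI hleft hD.measurableSet fun x hx => ?_
        refine sq_le_exp_mul_integral_sq
          (fun s hs => hasDerivWithinAt_timeDeriv hy (subset_closure hx) hs) ?_ (hy0 x hx) ht
        exact (contDiffOn_timeDeriv hT hy).continuousOn.comp (f := fun s => (x, s)) (by fun_prop)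
          fun s hs => ⟨subset_closure hx, hs⟩
    _ = Real.exp T * ∫ s in (0)..T, ∫ x in D, timeDeriv T y x s ^ 2 := by
        rw [integral_const_mul]
        simp only [intervalIntegral.integral_of_le hT.le]
        rw [integral_integral_swap hprod]
    _ ≤ Real.exp T * (T * S) := by
        refine mul_le_mul_of_nonneg_left ?_ (Real.exp_pos _).le
        calc ∫ s in (0)..T, ∫ x in D, timeDeriv T y x s ^ 2 ≤ ∫ _s in (0)..T, S :=
              intervalIntegral.integral_mono_on hT.le
                ((continuousOn_setIntegral_time hD hK hz).intervalIntegrable_of_Icc hT.le)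
                (by simp) hS
          _ = T * S := by simp

/-- The time derivative of a solution of the source problem solves a transport equation. -/
lemma isTransport_timeDeriv {d : ℕ} {T M δ₀ R₁ : ℝ} {D : Set (Esp (d+1))}
    {H : Esp (d+1) → Esp (d+1)} {p₁ f : Esp (d+1) → ℝ} {R y : Esp (d+1) → ℝ → ℝ} (hT : 0 < T)
    (hM : 0 ≤ M) (hD : IsOpen D) (hH : IsAdmissible M δ₀ (closure D) H)
    (hp₁b : ∀ x ∈ closure D, |p₁ x| ≤ M)
    (hR : ContDiffOn ℝ 2 (fun q : Esp (d+1) × ℝ => R q.1 q.2) (closure D ×ˢ Icc 0 T))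
    (hR₁ : 0 ≤ R₁) (hRb : ∀ x ∈ closure D, ∀ t ∈ Icc 0 T, |timeDeriv T R x t| ≤ R₁)
    (hf : ContinuousOn f (closure D))
    (hy : ContDiffOn ℝ 2 (fun q : Esp (d+1) × ℝ => y q.1 q.2) (closure D ×ˢ Icc 0 T))
    (heq : ∀ x ∈ D, ∀ t ∈ Ioo (0:ℝ) T,
      deriv (y x) t + ⟪H x, gradient (fun z => y z t) x⟫ + p₁ x * y x t = R x t * f x) :
    IsTransport d D T M R₁ H p₁ f (timeDeriv T R) fun q => timeDeriv T y q.1 q.2 := by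
  obtain ⟨U, -, -, hKU, hHU, hHM, hHM', -⟩ := hH
  have hDU : D ⊆ U := subset_closure.trans hKU
  have hsub : D ×ˢ Icc 0 T ⊆ closure D ×ˢ Icc 0 T := prod_mono_left subset_closure
  exact
    { bound_nonneg := hM
      contDiffOn_field := hHU.mono hDU
      norm_field_le := fun x hx => hHM x (hDU hx)
      norm_fderiv_field_le := fun x hx => hHM' x (hDU hx)
      abs_potential_le := fun x hx => hp₁b x (subset_closure hx)
      abs_source_le := fun x hx t ht => hRb x (subset_closure hx) t ht
      source_bound_nonneg := hR₁
      continuousOn_amplitude := hf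
      contDiffOn := contDiffOn_timeDeriv hT hy
      equation := fun x hx t ht => fderiv_timeDeriv_eq hD (hy.mono hsub) (hR.mono hsub) heq hx ht }

lemma intervalIntegral_boundaryFlux_timeDeriv {d : ℕ} {T ρ : ℝ} {ℓ ℓt : Esp d → ℝ}
    {y : Esp (d+1) → ℝ → ℝ} (hT : 0 ≤ T) :
    ∫ s in (0)..T, boundaryFlux d ρ ℓ ℓt (fun x => timeDeriv T y x s ^ 2)
      = ∫ t in Ioo 0 T, ∫ x' in ball (0 : Esp d) ρ,
        ((deriv (y (graphMk d x' (ℓ x'))) t) ^ 2 * omegaW d ℓ x'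
          + (deriv (y (graphMk d x' (ℓ x' - ℓt x'))) t) ^ 2
            * omegaW d (fun z => ℓ z - ℓt z) x') := by
  rw [intervalIntegral.integral_of_le hT, integral_Ioc_eq_integral_Ioo]
  refine setIntegral_congr_fun measurableSet_Ioo fun t ht => ?_
  simp only [boundaryFlux, deriv_eq_timeDeriv ht]

lemma sqrt_le_sqrt_mul_sqrt {a c b : ℝ} (hc : 0 ≤ c) (h : a ≤ c * b) :
    Real.sqrt a ≤ Real.sqrt c * Real.sqrt b :=
  (Real.sqrt_le_sqrt h).trans_eq (Real.sqrt_mul hc b)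

/-- **Proposition 4** (unconditional Lipschitz stability with full lateral
boundary data). -/
theorem proposition4_lipschitz_stability_full_boundary
    (d : ℕ) (hd : 1 ≤ d) (T M δ₀ ρ₁ : ℝ)
    (hT : 0 < T) (hM : 0 < M) (hδ₀ : 0 < δ₀) (hρ₁ : 0 < ρ₁)
    (ℓ ℓt : Esp d → ℝ)
    (hℓ : ContDiffOn ℝ 2 ℓ (closedBall 0 ρ₁))
    (hℓt : ContDiffOn ℝ 2 ℓt (closedBall 0 ρ₁))
    (hℓtpos : ∀ x' : Esp d, ‖x'‖ < ρ₁ → 0 < ℓt x')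
    (hℓt0 : ∀ x' : Esp d, ‖x'‖ = ρ₁ → ℓt x' = 0)
    (R : Esp (d+1) → ℝ → ℝ)
    (hR : ContDiffOn ℝ 2 (fun q : Esp (d+1) × ℝ => R q.1 q.2)
      (closure (graphDomain d ρ₁ ℓ ℓt) ×ˢ Icc 0 T))
    (H : Esp (d+1) → Esp (d+1))
    (hH : IsAdmissible M δ₀ (closure (graphDomain d ρ₁ ℓ ℓt)) H)
    (p₁ : Esp (d+1) → ℝ) (hp₁ : ContinuousOn p₁ (closure (graphDomain d ρ₁ ℓ ℓt)))
    (hp₁b : ∀ x ∈ closure (graphDomain d ρ₁ ℓ ℓt), |p₁ x| ≤ M)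
    (h0D : (0 : Esp (d+1)) ∈ closure (graphDomain d ρ₁ ℓ ℓt))
    (hdiam : Metric.diam (graphDomain d ρ₁ ℓ ℓt)
      < min 1 (min (δ₀ ^ 2 / (2 * M ^ 2)) (δ₀ ^ 2 * T / (16 * M))))
    (hR0 : ∀ x ∈ closure (graphDomain d ρ₁ ℓ ℓt), R x 0 ≠ 0)
    (hHν₂ : ∀ x' : Esp d, ‖x'‖ < ρ₁ →
      ⟪H (graphMk d x' (ℓ x' - ℓt x')), nuDown d (fun z => ℓ z - ℓt z) x'⟫ ≤ 0)
 :
    ∃ C > (0:ℝ),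
      ∀ (f : Esp (d+1) → ℝ) (y : Esp (d+1) → ℝ → ℝ),
        ContinuousOn f (closure (graphDomain d ρ₁ ℓ ℓt)) →
        ContDiffOn ℝ 2 (fun q : Esp (d+1) × ℝ => y q.1 q.2)
          (closure (graphDomain d ρ₁ ℓ ℓt) ×ˢ Icc 0 T) →
        (∀ x ∈ graphDomain d ρ₁ ℓ ℓt, ∀ t ∈ Ioo (0:ℝ) T,
          deriv (y x) t + ⟪H x, gradient (fun z => y z t) x⟫ + p₁ x * y x t
            = R x t * f x) →
        (∀ x ∈ graphDomain d ρ₁ ℓ ℓt, y x 0 = 0) →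
        Real.sqrt (∫ x in graphDomain d ρ₁ ℓ ℓt, (f x) ^ 2)
          + (⨆ t : Icc (0:ℝ) T,
              (Real.sqrt (∫ x in graphDomain d ρ₁ ℓ ℓt, (y x (t : ℝ)) ^ 2)
                + Real.sqrt (∫ x in graphDomain d ρ₁ ℓ ℓt, (deriv (y x) (t : ℝ)) ^ 2)))
        ≤ C * Real.sqrt (∫ t in Ioo 0 T, ∫ x' in ball (0 : Esp d) ρ₁,
            ((deriv (y (graphMk d x' (ℓ x'))) t) ^ 2 * omegaW d ℓ x'
              + (deriv (y (graphMk d x' (ℓ x' - ℓt x'))) t) ^ 2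
                * omegaW d (fun z => ℓ z - ℓt z) x')) := by
  have hG : IsGraphPair d ρ₁ ℓ ℓt :=
    ⟨hρ₁, hℓ.of_le one_le_two, hℓt.of_le one_le_two, hℓtpos, hℓt0⟩
  have hK := hG.isCompact_closure
  have hDo := hG.isOpen
  set D := graphDomain d ρ₁ ℓ ℓt
  have h0T : (0 : ℝ) ∈ Icc 0 T := ⟨le_rfl, hT.le⟩
  have hR0c : ContinuousOn (fun x => R x 0) (closure D) :=
    hR.continuousOn.comp (f := fun x => (x, (0 : ℝ))) (by fun_prop) fun x hx => ⟨hx, h0T⟩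
  obtain ⟨R₀, hR₀⟩ := hK.exists_bound_of_continuousOn hR0c
  obtain ⟨x₀, hx₀, hmin⟩ := hK.exists_isMinOn ⟨0, h0D⟩ hR0c.abs
  have hr₀ : 0 < |R x₀ 0| := abs_pos.2 (hR0 x₀ hx₀)
  obtain ⟨R₁, hR₁⟩ := (hK.prod (isCompact_Icc (a := (0 : ℝ)) (b := T))).exists_bound_of_continuousOn
    (contDiffOn_timeDeriv hT hR).continuousOn
  have hR₁0 : 0 ≤ R₁ := (norm_nonneg _).trans (hR₁ (0, 0) ⟨h0D, h0T⟩)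
  obtain ⟨-, hdiam2, hdiam3⟩ : diam D < 1 ∧ diam D < δ₀ ^ 2 / (2 * M ^ 2) ∧
      diam D < δ₀ ^ 2 * T / (16 * M) := by simpa only [lt_min_iff] using hdiam
  have hdM : diam D * M ^ 2 < δ₀ ^ 2 / 2 := by
    rw [lt_div_iff₀ (by positivity)] at hdiam2
    linarith
  have hdT : 2 * (diam D * M) < δ₀ ^ 2 / 4 * T := by
    rw [lt_div_iff₀ (by positivity)] at hdiam3
    have := mul_pos (pow_pos hδ₀ 2) hT
    linarith
  obtain ⟨Ca, hCa, hamp⟩ := hG.exists_amplitude_le (R₀ := R₀) hT hM.le hR₁0 hr₀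
    (by positivity : 0 < δ₀ ^ 2 / 4) hdT
  obtain ⟨Cf, hCf, hfor⟩ := hG.exists_forward_energy_le (R₀ := R₀) hT hM.le hR₁0
  have hcz : 0 ≤ Cf * (Ca + 1) := by positivity
  have hcy : 0 ≤ Real.exp T * (T * (Cf * (Ca + 1))) := by positivity
  refine ⟨Real.sqrt Ca + (Real.sqrt (Real.exp T * (T * (Cf * (Ca + 1))))
    + Real.sqrt (Cf * (Ca + 1))), by positivity, fun f y hf hy heq hy0 => ?_⟩
  have hsub : D ×ˢ Icc 0 T ⊆ closure D ×ˢ Icc 0 T := prod_mono_left subset_closure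
  have hZ := isTransport_timeDeriv hT hM.le hDo hH hp₁b hR hR₁0
    (fun x hx t ht => hR₁ (x, t) ⟨hx, ht⟩) hf hy heq
  have hz0 : ∀ x ∈ D, timeDeriv T y x 0 = R x 0 * f x := fun x hx =>
    timeDeriv_zero_eq hT hDo (hy.mono hsub) (hR.mono hsub) heq hy0 hx
  have hzR : ∀ x ∈ D, timeDeriv T y x 0 ^ 2 ≤ R₀ ^ 2 * f x ^ 2 := fun x hx => by
    rw [hz0 x hx, mul_pow]
    refine mul_le_mul_of_nonneg_right ?_ (sq_nonneg _)
    exact sq_le_sq' (abs_le.1 (hR₀ x (subset_closure hx))).1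
      (abs_le.1 (hR₀ x (subset_closure hx))).2
  have hzr : ∀ x ∈ D, |R x₀ 0| ^ 2 * f x ^ 2 ≤ timeDeriv T y x 0 ^ 2 := fun x hx => by
    rw [hz0 x hx, mul_pow, ← sq_abs (R x 0)]
    exact mul_le_mul_of_nonneg_right
      (pow_le_pow_left₀ hr₀.le (hmin (subset_closure hx)) 2) (sq_nonneg _)
  obtain ⟨U, hUo, -, hKU, hHU, hHM, hHM', hHδ⟩ := hH
  have hDU : D ⊆ U := subset_closure.trans hKU
  have hnorm : ∀ x ∈ D, ‖x‖ ≤ diam D := fun x hx =>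
    norm_le_diam_of_zero_mem hK h0D (subset_closure hx)
  have hF := hamp H p₁ f (psiW H) _ _ hZ (contDiffOn_psiW (hHU.mono hDU))
    ((contDiffOn_psiW hHU).continuousOn.mono hKU)
    (fun x hx => by
      have h1 := le_fderiv_psiW
        ((hHU.contDiffAt (hUo.mem_nhds (hDU hx))).differentiableAt one_ne_zero)
        (hHM x (hDU hx)) (hHM' x (hDU hx)) (hnorm x hx)
      have h2 := pow_le_pow_left₀ hδ₀.le (hHδ x (subset_closure hx)).le 2
      linarith)
    (fun x hx => abs_psiW_le (hHM x (hDU hx)) (hnorm x hx)) hzR hzr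
  have hE := hfor H p₁ f _ _ hZ hzR
  rw [intervalIntegral_boundaryFlux_timeDeriv hT.le] at hF
  simp only [intervalIntegral_boundaryFlux_timeDeriv hT.le] at hE
  set B := ∫ t in Ioo 0 T, ∫ x' in ball (0 : Esp d) ρ₁,
    ((deriv (y (graphMk d x' (ℓ x'))) t) ^ 2 * omegaW d ℓ x'
      + (deriv (y (graphMk d x' (ℓ x' - ℓt x'))) t) ^ 2 * omegaW d (fun z => ℓ z - ℓt z) x')
  have hzB : ∀ t ∈ Icc 0 T, ∫ x in D, timeDeriv T y x t ^ 2 ≤ Cf * (Ca + 1) * B := fun t ht => by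
    calc _ ≤ Cf * ((∫ x in D, f x ^ 2) + B) := hE t ht
      _ ≤ Cf * (Ca * B + B) := by gcongr
      _ = Cf * (Ca + 1) * B := by ring
  have : Nonempty (Icc (0 : ℝ) T) := ⟨⟨0, h0T⟩⟩
  rw [add_mul, add_mul]
  refine add_le_add (sqrt_le_sqrt_mul_sqrt hCa.le hF) (ciSup_le fun t => add_le_add ?_ ?_)
  · refine sqrt_le_sqrt_mul_sqrt hcy ?_
    have := setIntegral_sq_le_of_timeDeriv hT hDo hK hy hy0 hzB t.2
    simpa only [mul_assoc] using this
  · refine sqrt_le_sqrt_mul_sqrt hcz (le_trans ?_ (hzB t t.2))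
    exact integral_mono_of_nonneg (Eventually.of_forall fun x => sq_nonneg _)
      (hG.integrableOn_of_continuousOn (hZ.continuousOn_sq t.2))
      (Eventually.of_forall fun x => deriv_sq_le_timeDeriv_sq hT t.2)
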